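/- For every constant A ≥ 1 there exist constants c > 0, C > 0 and an integer N₀ (all depending only on A) such that the following holds. Let S ≥ 2 and n ≥ N₀ be integers with S ≤ n^A, and let Q ∈ M_S satisfy Σ_{j=1}^S min{q_j, √(q_j/(n ln n))} ≥ C·( √(ln n / n) + √S·(ln n)/n ). Then, in the Poisson sampling model with sample size n, inf_{L̂} sup_{P ∈ M_S} E_P (L̂(X) − L_1(P,Q))² ≥ c·( Σ_{j=1}^S min{q_j, √(q_j/(n ln n))} )², where the infimum is over all estimators L̂ : ℕ^S → ℝ. -/

import Mathlib

open scoped BigOperators ENNReal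

/-- The Poisson(lam) probability mass function on the nonnegative integers. -/
noncomputable def poissonPMF (lam : ℝ) (k : ℕ) : ℝ :=
  Real.exp (-lam) * lam ^ k / (Nat.factorial k)

/-- `P` is a probability vector on `{1,…,S}` (an element of `M_S`). -/
def IsDist {S : ℕ} (p : Fin S → ℝ) : Prop :=
  (∀ i, 0 ≤ p i) ∧ ∑ i, p i = 1

/-- Joint pmf of `S` independent coordinates `X_i ~ Poisson(n p_i)` (Poisson sampling model). -/
noncomputable def prodPMF {S : ℕ} (n : ℕ) (p : Fin S → ℝ) (x : Fin S → ℕ) : ℝ :=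
  ∏ i, poissonPMF (n * p i) (x i)

/-- The `L₁` distance between two vectors. -/
noncomputable def L1dist {S : ℕ} (p q : Fin S → ℝ) : ℝ :=
  ∑ i, |p i - q i|

/-- The mean squared error `E_P (est(X) - L)²` in the Poisson sampling model, valued in `ℝ≥0∞`. -/
noncomputable def risk {S : ℕ} (n : ℕ) (p : Fin S → ℝ) (L : ℝ) (est : (Fin S → ℕ) → ℝ) : ℝ≥0∞ :=
  ∑' x : Fin S → ℕ, ENNReal.ofReal (prodPMF n p x * (est x - L) ^ 2)

/-- alternating weights with halved end points -/
noncomputable def bw (m i : ℕ) : ℝ := (-1) ^ i * (if i = 0 ∨ i = m then 1 / 2 else 1)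

/-- Chebyshev-type node map -/
noncomputable def ph (m : ℕ) (z : ℝ) : ℝ := Real.sin (z * (Real.pi / (2 * m))) ^ 2

lemma tele_aux (θ : ℝ) (N : ℕ) :
    ∑ i ∈ Finset.range (N + 1), (-1 : ℝ) ^ i * (if i = 0 then 1 / 2 else 1) *
      (2 * Real.cos (i * θ) * Real.cos (θ / 2)) = (-1) ^ N * Real.cos ((N + 1 / 2) * θ) := by
  induction N with
  | zero => simp; ring_nf
  | succ N ih =>
    rw [Finset.sum_range_succ, ih]
    have h1 : Real.cos (((N + 1 : ℕ) + 1 / 2 : ℝ) * θ)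
        = Real.cos ((N + 1 : ℕ) * θ) * Real.cos (θ / 2)
          - Real.sin ((N + 1 : ℕ) * θ) * Real.sin (θ / 2) := by
      rw [← Real.cos_add]; ring_nf
    have h2 : Real.cos ((N + 1 / 2 : ℝ) * θ)
        = Real.cos ((N + 1 : ℕ) * θ) * Real.cos (θ / 2)
          + Real.sin ((N + 1 : ℕ) * θ) * Real.sin (θ / 2) := by
      rw [← Real.cos_sub]; push_cast; ring_nf
    rw [h1, h2, pow_succ]
    simp
    ring

lemma cheb0 (m : ℕ) (hm : 1 ≤ m) (j : ℤ) (hj : |(j : ℝ)| < m) :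
    ∑ i ∈ Finset.range (m + 1), bw m i * Real.cos (j * (i * (Real.pi / m))) = 0 := by
  have hm0 : (0 : ℝ) < m := by exact_mod_cast hm
  set θ : ℝ := j * (Real.pi / m) with hθ
  have hc : 0 < Real.cos (θ / 2) := by
    apply Real.cos_pos_of_mem_Ioo
    have := abs_lt.mp hj
    have hpi := Real.pi_pos
    have e : θ / 2 = (j / m) * (Real.pi / 2) := by rw [hθ]; field_simp
    have a1 : -1 < (j : ℝ) / m := by rw [lt_div_iff₀ hm0]; linarith
    have a2 : (j : ℝ) / m < 1 := by rw [div_lt_iff₀ hm0]; linarith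
    rw [e]
    constructor <;> nlinarith
  have hs : Real.sin (m * θ) = 0 := by
    have : (m : ℝ) * θ = j * Real.pi := by rw [hθ]; field_simp
    rw [this]; exact Real.sin_int_mul_pi j
  obtain ⟨N, rfl⟩ : ∃ N, m = N + 1 := ⟨m - 1, by omega⟩
  have key := tele_aux θ N
  have h2 : Real.cos ((N + 1 / 2 : ℝ) * θ)
        = Real.cos ((N + 1 : ℕ) * θ) * Real.cos (θ / 2)
          + Real.sin ((N + 1 : ℕ) * θ) * Real.sin (θ / 2) := by
      rw [← Real.cos_sub]; push_cast; ring_nf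
  rw [hs] at h2
  have h3 : (∑ i ∈ Finset.range (N + 1 + 1), bw (N + 1) i * Real.cos (j * (i * (Real.pi / (N + 1 : ℕ))))) * (2 * Real.cos (θ / 2)) = 0 := by
    rw [Finset.sum_range_succ, add_mul, Finset.sum_mul]
    have : ∀ i ∈ Finset.range (N + 1), bw (N + 1) i * Real.cos (j * (i * (Real.pi / (N + 1 : ℕ)))) * (2 * Real.cos (θ / 2))
        = (-1 : ℝ) ^ i * (if i = 0 then 1 / 2 else 1) *
      (2 * Real.cos (i * θ) * Real.cos (θ / 2)) := by
      intro i hi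
      have hi' : i ≠ N + 1 := by have := Finset.mem_range.mp hi; omega
      have e : (j : ℝ) * (i * (Real.pi / (N + 1 : ℕ))) = i * θ := by rw [hθ]; ring
      rw [e]; unfold bw; simp only [hi', or_false]; ring
    rw [Finset.sum_congr rfl this, key, h2]
    have e : (j : ℝ) * ((N + 1 : ℕ) * (Real.pi / (N + 1 : ℕ))) = (N + 1 : ℕ) * θ := by rw [hθ]; ring
    rw [e]; unfold bw; simp [pow_succ]; ring
  rcases mul_eq_zero.mp h3 with h | h
  · exact h
  · linarith

lemma cheb1 (m : ℕ) (hm : 1 ≤ m) (k : ℕ) : ∀ (j : ℤ), |(j : ℝ)| + k < m →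
    ∑ i ∈ Finset.range (m + 1), bw m i * (Real.cos (j * (i * (Real.pi / m))) *
      Real.cos (i * (Real.pi / m)) ^ k) = 0 := by
  induction k with
  | zero => intro j hj; simpa using cheb0 m hm j (by simpa using hj)
  | succ k ih =>
    intro j hj
    push_cast at hj
    have h1 := ih (j + 1) (by
      push_cast; have := abs_add_le (j : ℝ) 1; simp at this; linarith)
    have h2 := ih (j - 1) (by
      push_cast; have := abs_sub (j : ℝ) 1; simp at this; linarith)
    have : ∑ i ∈ Finset.range (m + 1), bw m i * (Real.cos (j * (i * (Real.pi / m))) *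
      Real.cos (i * (Real.pi / m)) ^ (k + 1)) = (1 / 2) * (0 + 0) := by
      nth_rewrite 1 [← h1]
      rw [← h2, ← Finset.sum_add_distrib, Finset.mul_sum]
      refine Finset.sum_congr rfl fun i _ => ?_
      have e1 : ((j + 1 : ℤ) : ℝ) * (i * (Real.pi / m)) = j * (i * (Real.pi / m)) + i * (Real.pi / m) := by push_cast; ring
      have e2 : ((j - 1 : ℤ) : ℝ) * (i * (Real.pi / m)) = j * (i * (Real.pi / m)) - i * (Real.pi / m) := by push_cast; ring
      rw [e1, e2, Real.cos_add, Real.cos_sub]; ring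
    simpa using this

lemma ph_eq (m : ℕ) (i : ℕ) : ph m i = (1 - Real.cos (i * (Real.pi / m))) / 2 := by
  unfold ph
  rw [Real.sin_sq, Real.cos_sq]
  have : 2 * ((i : ℝ) * (Real.pi / (2 * m))) = i * (Real.pi / m) := by
    ring
  rw [this]; ring

lemma cheb2 (m : ℕ) (hm : 1 ≤ m) (l : ℕ) : ∀ (k : ℕ), k + l < m →
    ∑ i ∈ Finset.range (m + 1), bw m i * (Real.cos (i * (Real.pi / m)) ^ k * ph m i ^ l) = 0 := by
  induction l with
  | zero =>
    intro k hk
    have := cheb1 m hm k 0 (by simpa using hk)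
    simpa using this
  | succ l ih =>
    intro k hk
    have h1 := ih k (by omega)
    have h2 := ih (k + 1) (by omega)
    have : ∑ i ∈ Finset.range (m + 1), bw m i * (Real.cos (i * (Real.pi / m)) ^ k * ph m i ^ (l + 1)) = (1 / 2) * (0 - 0) := by
      nth_rewrite 1 [← h1]
      rw [← h2, ← Finset.sum_sub_distrib, Finset.mul_sum]
      refine Finset.sum_congr rfl fun i _ => ?_
      rw [pow_succ (ph m i), ph_eq]; ring
    simpa using this

lemma cheb (m : ℕ) (l : ℕ) (h : l < m) :
    ∑ i ∈ Finset.range (m + 1), bw m i * ph m i ^ l = 0 := by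
  have := cheb2 m (by omega) l 0 (by omega)
  simpa using this

/-- second divided difference weights -/
lemma dd_zero (q y : ℝ) (hqy : q ≠ y) (k : ℕ) (s : Finset ℕ) (b t : ℕ → ℝ)
    (h1 : ∀ i ∈ s, t i ≠ q) (h2 : ∀ i ∈ s, t i ≠ y) (hz : ∀ l, l < k → ∑ i ∈ s, b i * t i ^ l = 0) :
    ∑ i ∈ s, b i * (t i ^ k / ((t i - q) * (t i - y)) + q ^ k / ((q - t i) * (q - y))
      + y ^ k / ((y - t i) * (y - q))) = 0 := by
  have hqy' : q - y ≠ 0 := sub_ne_zero.mpr hqy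
  have hyq' : y - q ≠ 0 := sub_ne_zero.mpr hqy.symm
  induction k using Nat.strong_induction_on with
  | _ k ih =>
    match k, hz, ih with
    | 0, _, _ =>
      refine Finset.sum_eq_zero fun i hi => ?_
      have a1 : t i - q ≠ 0 := sub_ne_zero.mpr (h1 i hi)
      have a2 : t i - y ≠ 0 := sub_ne_zero.mpr (h2 i hi)
      have a3 : q - t i ≠ 0 := sub_ne_zero.mpr (h1 i hi).symm
      have a4 : y - t i ≠ 0 := sub_ne_zero.mpr (h2 i hi).symm
      have : (t i ^ 0 / ((t i - q) * (t i - y)) + q ^ 0 / ((q - t i) * (q - y))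
      + y ^ 0 / ((y - t i) * (y - q))) = 0 := by
        rw [show q - t i = -(t i - q) by ring, show y - t i = -(t i - y) by ring, show y - q = -(q-y) by ring]
        field_simp; ring
      rw [this, mul_zero]
    | 1, _, _ =>
      refine Finset.sum_eq_zero fun i hi => ?_
      have a1 : t i - q ≠ 0 := sub_ne_zero.mpr (h1 i hi)
      have a2 : t i - y ≠ 0 := sub_ne_zero.mpr (h2 i hi)
      have : (t i ^ 1 / ((t i - q) * (t i - y)) + q ^ 1 / ((q - t i) * (q - y))
      + y ^ 1 / ((y - t i) * (y - q))) = 0 := by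
        rw [show q - t i = -(t i - q) by ring, show y - t i = -(t i - y) by ring, show y - q = -(q-y) by ring]
        field_simp; ring
      rw [this, mul_zero]
    | k + 2, hz, ih =>
      have e1 := ih (k + 1) (by omega) (fun l hl => hz l (by omega))
      have e0 := ih k (by omega) (fun l hl => hz l (by omega))
      have ek := hz k (by omega)
      have : ∀ i ∈ s, b i * (t i ^ (k+2) / ((t i - q) * (t i - y)) + q ^ (k+2) / ((q - t i) * (q - y))
      + y ^ (k+2) / ((y - t i) * (y - q))) = b i * t i ^ k + (q + y) * (b i * (t i ^ (k+1) / ((t i - q) * (t i - y)) + q ^ (k+1) / ((q - t i) * (q - y))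
      + y ^ (k+1) / ((y - t i) * (y - q)))) - q * y * (b i * (t i ^ k / ((t i - q) * (t i - y)) + q ^ k / ((q - t i) * (q - y))
      + y ^ k / ((y - t i) * (y - q)))) := by
        intro i hi
        have a1 : t i - q ≠ 0 := sub_ne_zero.mpr (h1 i hi)
        have a2 : t i - y ≠ 0 := sub_ne_zero.mpr (h2 i hi)
        rw [show q - t i = -(t i - q) by ring, show y - t i = -(t i - y) by ring, show y - q = -(q-y) by ring]
        field_simp
        ring
      rw [Finset.sum_congr rfl this, Finset.sum_sub_distrib, Finset.sum_add_distrib, ← Finset.mul_sum, ← Finset.mul_sum, e1, e0, ek]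
      ring

/-- alternating sums of a monotone sequence, first weight halved -/
lemma alt_mono (b : ℕ → ℝ) (r : ℕ) (hb : ∀ i, i ≤ r → 0 ≤ b i) (hm : ∀ i, i < r → b i ≤ b (i + 1)) :
    0 ≤ (-1) ^ r * ∑ i ∈ Finset.range (r + 1), (-1 : ℝ) ^ i * (if i = 0 then 1 / 2 else 1) * b i ∧
    (-1) ^ r * ∑ i ∈ Finset.range (r + 1), (-1 : ℝ) ^ i * (if i = 0 then 1 / 2 else 1) * b i ≤ b r ∧
    (1 ≤ r → b r - b (r - 1) ≤ (-1) ^ r * ∑ i ∈ Finset.range (r + 1), (-1 : ℝ) ^ i * (if i = 0 then 1 / 2 else 1) * b i) := by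
  induction r with
  | zero =>
    have := hb 0 le_rfl
    simp; constructor <;> linarith
  | succ r ih =>
    obtain ⟨i1, i2, -⟩ := ih (fun i hi => hb i (by omega)) (fun i hi => hm i (by omega))
    have h := hm r (by omega)
    have h0 := hb (r + 1) le_rfl
    rw [Finset.sum_range_succ]
    have e : (-1 : ℝ) ^ (r + 1) * (∑ i ∈ Finset.range (r + 1), (-1 : ℝ) ^ i * (if i = 0 then 1 / 2 else 1) * b i + (-1) ^ (r + 1) * (if r + 1 = 0 then 1 / 2 else 1) * b (r + 1))
       = b (r + 1) - (-1) ^ r * ∑ i ∈ Finset.range (r + 1), (-1 : ℝ) ^ i * (if i = 0 then 1 / 2 else 1) * b i := by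
      have : ((-1 : ℝ) ^ (r + 1)) * (-1) ^ (r + 1) = 1 := by
        rw [← mul_pow]; norm_num
      simp only [Nat.succ_ne_zero, if_false, mul_one]
      rw [mul_add, ← mul_assoc _ _ (b (r+1)), this, pow_succ]; ring
    rw [e]
    refine ⟨by linarith, by linarith, fun _ => ?_⟩
    rw [Nat.add_sub_cancel]; linarith

/-- the constant `1/(2π²)` -/
noncomputable def kp : ℝ := 1 / (2 * Real.pi ^ 2)

/-- the angular unit -/
noncomputable def al (m : ℕ) : ℝ := Real.pi / (2 * m)

lemma kp_pos : 0 < kp := by unfold kp; positivity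

lemma kp_le : kp ≤ 1 / 2 := by
  unfold kp
  have h := Real.pi_gt_three
  rw [div_le_div_iff₀ (by positivity) (by norm_num)]
  nlinarith

lemma al_pos (m : ℕ) (hm : 1 ≤ m) : 0 < al m := by
  have hm0 : (0 : ℝ) < m := by exact_mod_cast hm
  unfold al; positivity

lemma ph_def (m : ℕ) (z : ℝ) : ph m z = Real.sin (z * al m) ^ 2 := rfl

lemma ph_diff (m : ℕ) (w z : ℝ) :
    ph m w - ph m z = Real.sin ((w - z) * al m) * Real.sin ((w + z) * al m) := by
  rw [ph_def, ph_def, sub_mul, add_mul, Real.sin_sub, Real.sin_add]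
  have h1 := Real.sin_sq_add_cos_sq (w * al m)
  have h2 := Real.sin_sq_add_cos_sq (z * al m)
  have e1 : Real.cos (w * al m) ^ 2 = 1 - Real.sin (w * al m) ^ 2 := by linarith
  have e2 : Real.cos (z * al m) ^ 2 = 1 - Real.sin (z * al m) ^ 2 := by linarith
  have : (Real.sin (w * al m) * Real.cos (z * al m) - Real.cos (w * al m) * Real.sin (z * al m)) *
      (Real.sin (w * al m) * Real.cos (z * al m) + Real.cos (w * al m) * Real.sin (z * al m))
      = Real.sin (w * al m) ^ 2 * Real.cos (z * al m) ^ 2 - Real.cos (w * al m) ^ 2 * Real.sin (z * al m) ^ 2 := by ring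
  rw [this, e1, e2]; ring

lemma ph_diff_le (m : ℕ) (hm : 1 ≤ m) (w z : ℝ) (hz : 0 ≤ z) (hzw : z ≤ w) :
    ph m w - ph m z ≤ al m ^ 2 * ((w - z) * (w + z)) := by
  have ha := al_pos m hm
  rw [ph_diff]
  calc _ ≤ |Real.sin ((w - z) * al m) * Real.sin ((w + z) * al m)| := le_abs_self _
    _ = |Real.sin ((w - z) * al m)| * |Real.sin ((w + z) * al m)| := abs_mul _ _
    _ ≤ |(w - z) * al m| * |(w + z) * al m| := by
        exact mul_le_mul Real.abs_sin_le_abs Real.abs_sin_le_abs (abs_nonneg _) (abs_nonneg _)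
    _ = ((w - z) * al m) * ((w + z) * al m) := by
        rw [abs_of_nonneg, abs_of_nonneg]
        · apply mul_nonneg _ ha.le; linarith
        · apply mul_nonneg _ ha.le; linarith
    _ = _ := by ring

lemma ph_diff_ge (m : ℕ) (hm : 1 ≤ m) (w z : ℝ) (hz : 0 ≤ z) (hzw : z ≤ w) (hw : w ≤ m)
    (hs : w + z ≤ 7 * m / 4) :
    kp * al m ^ 2 * ((w - z) * (w + z)) ≤ ph m w - ph m z := by
  have ha := al_pos m hm
  have hm0 : (0 : ℝ) < m := by exact_mod_cast hm
  have hpi := Real.pi_pos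
  have ham : m * al m = Real.pi / 2 := by unfold al; field_simp
  rw [ph_diff]
  have h1 : 2 / Real.pi * ((w - z) * al m) ≤ Real.sin ((w - z) * al m) := by
    apply Real.mul_le_sin
    · apply mul_nonneg _ ha.le; linarith
    · rw [← ham]; gcongr; linarith
  have hx0 : 0 ≤ (w + z) * al m / 2 := by
    apply div_nonneg _ (by norm_num); apply mul_nonneg _ ha.le; linarith
  have hx1 : (w + z) * al m ≤ 7 / 4 * (Real.pi / 2) := by
    rw [← ham]
    calc (w + z) * al m ≤ (7 * m / 4) * al m := by gcongr
      _ = _ := by ring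
  have h2 : 2 / Real.pi * ((w + z) * al m / 2) ≤ Real.sin ((w + z) * al m / 2) := by
    apply Real.mul_le_sin hx0
    linarith
  have h3 : 1 / 8 ≤ Real.cos ((w + z) * al m / 2) := by
    have := Real.one_sub_mul_le_cos hx0 (by linarith)
    have h4 : 2 / Real.pi * ((w + z) * al m / 2) ≤ 7 / 8 := by
      rw [div_mul_eq_mul_div, div_le_iff₀ hpi]; linarith
    linarith
  have h5 : (w + z) * al m / (4 * Real.pi) ≤ Real.sin ((w + z) * al m) := by
    have : (w + z) * al m = 2 * ((w + z) * al m / 2) := by ring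
    rw [this, Real.sin_two_mul, ← this]
    have h0 : 0 ≤ 2 / Real.pi * ((w + z) * al m / 2) := by positivity
    calc (w + z) * al m / (4 * Real.pi) = 2 * (2 / Real.pi * ((w + z) * al m / 2)) * (1 / 8) := by
          field_simp; ring
      _ ≤ _ := by
          apply mul_le_mul _ h3 (by norm_num) _
          · linarith
          · linarith
  have h6 : 0 ≤ 2 / Real.pi * ((w - z) * al m) := by
    apply mul_nonneg (by positivity); apply mul_nonneg _ ha.le; linarith
  have h7 : 0 ≤ (w + z) * al m / (4 * Real.pi) := by
    apply div_nonneg _ (by positivity); linarith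
  calc kp * al m ^ 2 * ((w - z) * (w + z)) = (2 / Real.pi * ((w - z) * al m)) * ((w + z) * al m / (4 * Real.pi)) := by
        unfold kp; field_simp; ring
    _ ≤ _ := by gcongr; exact h6.trans h1

lemma ph_mono (m : ℕ) (hm : 1 ≤ m) (w z : ℝ) (hz : 0 ≤ z) (hzw : z ≤ w) (hw : w ≤ m) : ph m z ≤ ph m w := by
  have ha := al_pos m hm
  have hm0 : (0 : ℝ) < m := by exact_mod_cast hm
  have ham : m * al m = Real.pi / 2 := by unfold al; field_simp
  rw [ph_def, ph_def]
  have hpi := Real.pi_pos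
  have h1 : 0 ≤ z * al m := by positivity
  have h2 : w * al m ≤ Real.pi / 2 := by rw [← ham]; gcongr
  have h3 : z * al m ≤ w * al m := by gcongr
  apply pow_le_pow_left₀
  · apply Real.sin_nonneg_of_nonneg_of_le_pi h1; linarith
  · apply Real.sin_le_sin_of_le_of_le_pi_div_two <;> linarith

lemma ph_nonneg (m : ℕ) (z : ℝ) : 0 ≤ ph m z := by rw [ph_def]; positivity
lemma ph_le_one (m : ℕ) (z : ℝ) : ph m z ≤ 1 := by rw [ph_def]; exact Real.sin_sq_le_one _
lemma ph_zero (m : ℕ) : ph m 0 = 0 := by simp [ph_def]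
lemma ph_half (m : ℕ) (hm : 1 ≤ m) : ph m (m / 2) = 1 / 2 := by
  have hm0 : (0 : ℝ) < m := by exact_mod_cast hm
  have : (m / 2 : ℝ) * al m = Real.pi / 4 := by unfold al; field_simp; norm_num
  rw [ph_def, this, Real.sin_pi_div_four, div_pow, Real.sq_sqrt (by norm_num)]; norm_num

lemma half_sum (N : ℕ) : ∑ l ∈ Finset.range N, 1 / ((l : ℝ) + 1 / 2) ^ 2 ≤ (8 : ℝ) - (8 : ℝ) / ((N : ℝ) + 1) := by
  induction N with
  | zero => simp
  | succ N ih =>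
    rw [Finset.sum_range_succ]
    have : 1 / ((N : ℝ) + 1 / 2) ^ 2 ≤ 8 / (N + 1) - 8 / ((N + 1 : ℕ) + 1) := by
      have hN : (0 : ℝ) ≤ N := by positivity
      push_cast
      rw [div_sub_div _ _ (by positivity) (by positivity), div_le_div_iff₀ (by positivity) (by positivity)]
      nlinarith
    linarith

lemma half_sum' (N : ℕ) : ∑ l ∈ Finset.range N, 1 / ((l : ℝ) + 1 / 2) ^ 2 ≤ 8 := by
  have := half_sum N
  have h : (0 : ℝ) ≤ 8 / (N + 1) := by positivity
  linarith

lemma split_sum (m r : ℕ) (hr : r + 1 ≤ m) (f : ℕ → ℝ) :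
    ∑ i ∈ Finset.range (m + 1), f i = ∑ i ∈ Finset.range (r + 1), f i +
      ∑ l ∈ Finset.range (m - r - 1 + 1), f (r + 1 + l) := by
  have : m + 1 = (r + 1) + (m - r - 1 + 1) := by omega
  rw [this, Finset.sum_range_add]

lemma node_sum (m r : ℕ) (hr : r + 1 ≤ m) :
    ∑ i ∈ Finset.range (m + 1), 1 / ((i : ℝ) - (r + 1 / 2)) ^ 2 ≤ 16 := by
  rw [split_sum m r hr]
  have h1 : ∑ i ∈ Finset.range (r + 1), 1 / ((i : ℝ) - (r + 1 / 2)) ^ 2 ≤ 8 := by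
    rw [← Finset.sum_range_reflect]
    refine le_trans (le_of_eq ?_) (half_sum' (r + 1))
    refine Finset.sum_congr rfl fun i hi => ?_
    have := Finset.mem_range.mp hi
    rw [show r + 1 - 1 - i = r - i by omega, Nat.cast_sub (by omega)]
    congr 1; ring
  have h2 : ∑ l ∈ Finset.range (m - r - 1 + 1), 1 / (((r + 1 + l : ℕ) : ℝ) - (r + 1 / 2)) ^ 2 ≤ 8 := by
    refine le_trans (le_of_eq ?_) (half_sum' (m - r - 1 + 1))
    refine Finset.sum_congr rfl fun i hi => ?_
    push_cast; congr 1; ring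
  linarith

lemma node_sum_right (m r : ℕ) :
    ∑ l ∈ Finset.range (m - r - 1 + 1), 1 / (((r + 1 + l : ℕ) : ℝ) - (r + 1 / 2)) ^ 2 ≤ 8 := by
  refine le_trans (le_of_eq ?_) (half_sum' (m - r - 1 + 1))
  refine Finset.sum_congr rfl fun i hi => ?_
  push_cast; congr 1; ring

lemma bw_abs (m i : ℕ) : |bw m i| ≤ 1 := by
  unfold bw
  rw [abs_mul, abs_pow, abs_neg, abs_one, one_pow, one_mul]
  split_ifs <;> norm_num

lemma ph_mono_nat (m : ℕ) (hm : 1 ≤ m) (i j : ℕ) (hij : i ≤ j) (hj : j ≤ m) : ph m i ≤ ph m j :=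
  ph_mono m hm j i (by positivity) (by exact_mod_cast hij) (by exact_mod_cast hj)

lemma bw_left (m i r : ℕ) (hi : i ≤ r) (hr : r + 1 ≤ m) : bw m i = (-1 : ℝ) ^ i * (if i = 0 then 1 / 2 else 1) := by
  unfold bw
  have : i ≠ m := by omega
  simp [this]

lemma alt_left (m r : ℕ) (hr : r + 1 ≤ m) (z : ℝ) (hz : ph m r < z) :
    |∑ i ∈ Finset.range (r + 1), bw m i * (1 / (z - ph m i))| ≤ 1 / (z - ph m r) ∧
    (1 ≤ r → 1 / (z - ph m r) - 1 / (z - ph m (r - 1 : ℕ)) ≤ |∑ i ∈ Finset.range (r + 1), bw m i * (1 / (z - ph m i))|) ∧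
    0 ≤ (-1) ^ r * ∑ i ∈ Finset.range (r + 1), bw m i * (1 / (z - ph m i)) := by
  have hm : 1 ≤ m := by omega
  have hpos : ∀ i, i ≤ r → 0 < z - ph m i := fun i hi => by
    have := ph_mono_nat m hm i r hi (by omega); linarith
  obtain ⟨h1, h2, h3⟩ := alt_mono (fun i => 1 / (z - ph m i)) r
    (fun i hi => by have := hpos i hi; positivity)
    (fun i hi => by
      have := hpos (i + 1) (by omega)
      have h' := ph_mono_nat m hm i (i + 1) (by omega) (by omega)
      apply one_div_le_one_div_of_le this
      linarith)
  have e : ∑ i ∈ Finset.range (r + 1), bw m i * (1 / (z - ph m i)) = ∑ i ∈ Finset.range (r + 1), (-1 : ℝ) ^ i * (if i = 0 then 1 / 2 else 1) * (1 / (z - ph m i)) := by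
    refine Finset.sum_congr rfl fun i hi => ?_
    rw [bw_left m i r (by have := Finset.mem_range.mp hi; omega) hr]
  rw [e]
  have e2 : |∑ i ∈ Finset.range (r + 1), (-1 : ℝ) ^ i * (if i = 0 then 1 / 2 else 1) * (1 / (z - ph m i))|
     = (-1) ^ r * ∑ i ∈ Finset.range (r + 1), (-1 : ℝ) ^ i * (if i = 0 then 1 / 2 else 1) * (1 / (z - ph m i)) := by
    rw [← abs_of_nonneg h1, abs_mul, abs_pow, abs_neg, abs_one, one_pow, one_mul]
  rw [e2]
  exact ⟨h2, h3, h1⟩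

lemma alt_right (m r : ℕ) (hr : r + 1 ≤ m) (z : ℝ) (hz : z < ph m (r + 1 : ℕ)) :
    |∑ l ∈ Finset.range (m - r - 1 + 1), bw m (r + 1 + l) * (1 / (z - ph m (r + 1 + l : ℕ)))| ≤ 1 / (ph m (r + 1 : ℕ) - z) := by
  have hm : 1 ≤ m := by omega
  have hpos : ∀ i, r + 1 ≤ i → i ≤ m → 0 < ph m i - z := fun i hi hi' => by
    have := ph_mono_nat m hm (r + 1) i hi hi'; linarith
  obtain ⟨h1, h2, h3⟩ := alt_mono (fun i => 1 / (ph m (m - i : ℕ) - z)) (m - r - 1)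
    (fun i hi => by have := hpos (m - i) (by omega) (by omega); positivity)
    (fun i hi => by
      have := hpos (m - (i + 1)) (by omega) (by omega)
      have h' := ph_mono_nat m hm (m - (i + 1)) (m - i) (by omega) (by omega)
      apply one_div_le_one_div_of_le this
      linarith)
  rw [← Finset.sum_range_reflect]
  have e : ∀ l ∈ Finset.range (m - r - 1 + 1), bw m (r + 1 + (m - r - 1 + 1 - 1 - l)) * (1 / (z - ph m (r + 1 + (m - r - 1 + 1 - 1 - l) : ℕ)))
     = - ((-1) ^ m * ((-1 : ℝ) ^ l * (if l = 0 then 1 / 2 else 1) * (1 / (ph m (m - l : ℕ) - z)))) := by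
    intro l hl
    have hl' := Finset.mem_range.mp hl
    rw [show r + 1 + (m - r - 1 + 1 - 1 - l) = m - l by omega]
    have : bw m (m - l) = (-1) ^ m * ((-1) ^ l * (if l = 0 then 1 / 2 else 1)) := by
      unfold bw
      have c : (m - l = 0 ∨ m - l = m) ↔ l = 0 := by omega
      rw [if_congr c rfl rfl]
      have : (-1 : ℝ) ^ (m - l) = (-1) ^ m * (-1) ^ l := by
        have h : m = (m - l) + l := by omega
        conv_rhs => rw [h, pow_add]
        rw [mul_assoc, ← mul_pow]; norm_num
      rw [this]; ring
    rw [this, ← neg_sub (ph m (m - l : ℕ)) z, one_div_neg_eq_neg_one_div]; ring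
  rw [Finset.sum_congr rfl e, Finset.sum_neg_distrib, ← Finset.mul_sum, abs_neg, abs_mul, abs_pow, abs_neg, abs_one, one_pow, one_mul]
  have e2 : |∑ l ∈ Finset.range (m - r - 1 + 1), (-1 : ℝ) ^ l * (if l = 0 then 1 / 2 else 1) * (1 / (ph m (m - l : ℕ) - z))|
     = (-1) ^ (m - r - 1) * ∑ l ∈ Finset.range (m - r - 1 + 1), (-1 : ℝ) ^ l * (if l = 0 then 1 / 2 else 1) * (1 / (ph m (m - l : ℕ) - z)) := by
    rw [← abs_of_nonneg h1, abs_mul, abs_pow, abs_neg, abs_one, one_pow, one_mul]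
  rw [e2]
  refine h2.trans (le_of_eq ?_)
  simp only [show m - (m - r - 1) = r + 1 by omega]

lemma ph_absdiff (m : ℕ) (hm : 1 ≤ m) (w z : ℝ) (hz : 0 ≤ z) (hw0 : 0 ≤ w) (hz' : z ≤ m) (hw : w ≤ m)
    (hs : w + z ≤ 7 * m / 4) :
    kp * al m ^ 2 * (|w - z| * (w + z)) ≤ |ph m w - ph m z| := by
  rcases le_total z w with h | h
  · rw [abs_of_nonneg (sub_nonneg.mpr h)]
    exact (ph_diff_ge m hm w z hz h hw hs).trans (le_abs_self _)
  · rw [abs_sub_comm w z, abs_sub_comm (ph m w), abs_of_nonneg (sub_nonneg.mpr h), add_comm w z]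
    exact (ph_diff_ge m hm z w hw0 h hz' (by linarith)).trans (le_abs_self _)

lemma half_dist (i r : ℕ) : (1 / 2 : ℝ) ≤ |(i : ℝ) - (r + 1 / 2)| := by
  rcases Nat.lt_or_ge r i with h | h
  · have : (r : ℝ) + 1 ≤ i := by exact_mod_cast h
    rw [abs_of_nonneg (by linarith)]; linarith
  · have : (i : ℝ) ≤ r := by exact_mod_cast h
    rw [abs_of_nonpos (by linarith)]; linarith

set_option maxHeartbeats 6000000 in
lemma core_raw (m r : ℕ) (hr : 2 * r + 1 ≤ m) (q ε E : ℝ)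
    (h1 : ph m r < q) (h2 : q ≤ ph m (r + 1 / 2))
    (hε : ε = (q - ph m r) / (ph m (r + 1 / 2) - ph m r))
    (hE : E = kp * al m ^ 2 * (r + 1 / 2)) :
    ∃ ν x : Option (Option (Fin (m + 1))) → ℝ, (∀ i, 0 ≤ x i ∧ x i ≤ 1) ∧
      (∀ k, k < m → ∑ i, ν i * x i ^ k = 0) ∧
      ∑ i, |ν i| ≤ 48 / (ε * E ^ 2) ∧
      ∑ i, |ν i| * x i ≤ q * ((40 + 50 / kp) / (ε * E ^ 2)) ∧
      kp ^ 2 / (3 * E) ≤ ∑ i, ν i * |x i - q| := by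
  have hm : 1 ≤ m := by omega
  have hr1 : r + 1 ≤ m := by omega
  have hmR : (1 : ℝ) ≤ m := by exact_mod_cast hm
  have hrR : 2 * (r : ℝ) + 1 ≤ m := by exact_mod_cast hr
  have hr0 : (0 : ℝ) ≤ r := by positivity
  have hr1R : (r : ℝ) + 1 ≤ m := by exact_mod_cast hr1
  have ha := al_pos m hm
  have hk := kp_pos
  set ρ : ℝ := r + 1 / 2 with hρ
  have hρ0 : 0 < ρ := by rw [hρ]; positivity
  set P := ph m ρ with hP
  set y := ph m (ρ + 1 / 4) with hy
  set a2 := al m ^ 2 with ha2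
  have ha20 : 0 < a2 := by positivity
  have hE0 : 0 < E := by rw [hE]; positivity
  have htr1 : (((r + 1 : ℕ) : ℝ)) = r + 1 := by push_cast; ring
  -- distances
  have dyP : E / 2 ≤ y - P := by
    have := ph_diff_ge m hm (ρ + 1 / 4) ρ hρ0.le (by linarith) (by linarith) (by linarith)
    refine le_trans ?_ this
    rw [hE]
    have : kp * a2 * ρ / 2 = kp * a2 * (ρ / 2) := by ring
    rw [this]; gcongr; nlinarith
  have dPr : E / 2 ≤ P - ph m r := by
    have := ph_diff_ge m hm ρ r hr0 (by linarith) (by linarith) (by linarith)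
    refine le_trans ?_ this
    rw [hE]
    have : kp * a2 * ρ / 2 = kp * a2 * (ρ / 2) := by ring
    rw [this]; gcongr; nlinarith
  have dr1P : E / 2 ≤ ph m (r + 1 : ℕ) - P := by
    rw [htr1]
    have := ph_diff_ge m hm (r + 1) ρ hρ0.le (by linarith) (by linarith) (by linarith)
    refine le_trans ?_ this
    rw [hE]
    have : kp * a2 * ρ / 2 = kp * a2 * (ρ / 2) := by ring
    rw [this]; gcongr; nlinarith
  have dyr : E / 2 ≤ y - ph m r := by linarith
  have dr1y : E / 2 ≤ ph m (r + 1 : ℕ) - y := by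
    rw [htr1]
    have := ph_diff_ge m hm (r + 1) (ρ + 1 / 4) (by linarith) (by linarith) (by linarith) (by linarith)
    refine le_trans ?_ this
    rw [hE]
    have : kp * a2 * ρ / 2 = kp * a2 * (ρ / 2) := by ring
    rw [this]; gcongr; nlinarith
  have hε0 : 0 < ε := by rw [hε]; apply div_pos <;> linarith
  have hε1 : ε ≤ 1 := by rw [hε, div_le_one (by linarith)]; linarith
  have hεq : ε * (P - ph m r) = q - ph m r := by rw [hε]; field_simp [show P - ph m r ≠ 0 by linarith]
  have dyq : E / 2 ≤ y - q := by linarith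
  have dqr : ε * E / 2 ≤ q - ph m r := by
    rw [← hεq, mul_div_assoc]; gcongr
  have dr1q : E / 2 ≤ ph m (r + 1 : ℕ) - q := by linarith
  have hq0 : 0 < q := lt_of_le_of_lt (ph_nonneg m r) h1
  have hεE : 0 < ε * E := by positivity
  -- node distances
  have F1 : ∀ i : ℕ, i ≤ m → kp * a2 * (|(i : ℝ) - ρ| * (i + ρ)) ≤ |ph m i - P| := by
    intro i hi
    have hi' : (i : ℝ) ≤ m := by exact_mod_cast hi
    exact ph_absdiff m hm i ρ hρ0.le (by positivity) (by linarith) hi' (by linarith)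
  have F2 : ∀ i : ℕ, i ≤ m → kp * a2 * (|(i : ℝ) - ρ| / 2 * (i + ρ)) ≤ |ph m i - y| := by
    intro i hi
    have hi' : (i : ℝ) ≤ m := by exact_mod_cast hi
    have := ph_absdiff m hm i (ρ + 1 / 4) (by linarith) (by positivity) (by linarith) hi' (by linarith)
    refine le_trans ?_ this
    have h3 := half_dist i r
    rw [← hρ] at h3
    have h4 : |(i : ℝ) - ρ| / 2 ≤ |(i : ℝ) - (ρ + 1 / 4)| := by
      have := abs_sub_abs_le_abs_sub ((i : ℝ) - ρ) (1 / 4)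
      rw [abs_of_pos (by norm_num : (0 : ℝ) < 1 / 4), show (i : ℝ) - ρ - 1 / 4 = i - (ρ + 1 / 4) by ring] at this
      linarith
    gcongr
    linarith
  have tle : ∀ i : ℕ, i ≤ r → ph m i ≤ ph m r := fun i hi => ph_mono_nat m hm i r hi (by omega)
  have tge : ∀ i : ℕ, r + 1 ≤ i → i ≤ m → ph m (r + 1 : ℕ) ≤ ph m i := fun i hi hi' => ph_mono_nat m hm (r + 1) i hi hi'
  have F3 : ∀ i : ℕ, i ≤ m → ε * |ph m i - P| ≤ |ph m i - q| := by
    intro i hi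
    rcases Nat.lt_or_ge r i with h | h
    · have := tge i h hi
      rw [abs_of_nonneg (by linarith), abs_of_nonneg (by linarith)]
      nlinarith
    · have := tle i h
      rw [abs_of_nonpos (by linarith), abs_of_nonpos (by linarith)]
      nlinarith
  have F3' : ∀ i : ℕ, r + 1 ≤ i → i ≤ m → |ph m i - P| ≤ |ph m i - q| := by
    intro i h hi
    have := tge i h hi
    rw [abs_of_nonneg (by linarith), abs_of_nonneg (by linarith)]
    linarith
  have neq : ∀ i : ℕ, i ≤ m → ph m i ≠ q := by
    intro i hi
    rcases Nat.lt_or_ge r i with h | h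
    · have := tge i h hi; intro hh; linarith
    · have := tle i h; intro hh; linarith
  have ney : ∀ i : ℕ, i ≤ m → ph m i ≠ y := by
    intro i hi
    rcases Nat.lt_or_ge r i with h | h
    · have := tge i h hi; intro hh; linarith
    · have := tle i h; intro hh; linarith
  have hE2 : E ^ 2 = kp ^ 2 * a2 ^ 2 * ρ ^ 2 := by rw [hE]; ring
  -- node weights
  have W1 : ∀ i : ℕ, i ≤ m → |bw m i / ((ph m i - q) * (ph m i - y))| ≤ 2 / (ε * E ^ 2) * (1 / ((i : ℝ) - ρ) ^ 2) := by
    intro i hi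
    have hd : 0 < |(i : ℝ) - ρ| := lt_of_lt_of_le (by norm_num) (half_dist i r)
    have hi0 : (0 : ℝ) ≤ i := by positivity
    rw [abs_div, abs_mul]
    have hden : ε * E ^ 2 * ((i : ℝ) - ρ) ^ 2 / 2 ≤ |ph m i - q| * |ph m i - y| := by
      calc ε * E ^ 2 * ((i : ℝ) - ρ) ^ 2 / 2
          ≤ (ε * (kp * a2 * (|(i : ℝ) - ρ| * (i + ρ)))) * (kp * a2 * (|(i : ℝ) - ρ| / 2 * (i + ρ))) := by
            rw [hE2, ← sq_abs ((i : ℝ) - ρ)]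
            have : ρ ^ 2 ≤ (i + ρ) ^ 2 := by gcongr; linarith
            have e : (ε * (kp * a2 * (|(i : ℝ) - ρ| * (i + ρ)))) * (kp * a2 * (|(i : ℝ) - ρ| / 2 * (i + ρ)))
              = ε * (kp ^ 2 * a2 ^ 2 * (i + ρ) ^ 2) * |(i : ℝ) - ρ| ^ 2 / 2 := by ring
            rw [e]; gcongr
        _ ≤ _ := mul_le_mul (le_trans (by gcongr; exact F1 i hi) (F3 i hi)) (F2 i hi) (by positivity) (abs_nonneg _)
    have hsq : 0 < ((i : ℝ) - ρ) ^ 2 := by rw [← sq_abs]; positivity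
    calc _ ≤ 1 / (ε * E ^ 2 * ((i : ℝ) - ρ) ^ 2 / 2) := by
          apply div_le_div₀ (by norm_num) (bw_abs m i) (by positivity) hden
      _ = _ := by field_simp
  have W2 : ∀ i : ℕ, r + 1 ≤ i → i ≤ m → |bw m i / ((ph m i - q) * (ph m i - y))| * ph m i ≤ 2 / (kp ^ 2 * a2) * (1 / ((i : ℝ) - ρ) ^ 2) := by
    intro i hi1 hi
    have hd : 0 < |(i : ℝ) - ρ| := lt_of_lt_of_le (by norm_num) (half_dist i r)
    have hi0 : (0 : ℝ) < i := by exact_mod_cast (by omega : 0 < i)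
    rw [abs_div, abs_mul]
    have hden : kp ^ 2 * a2 ^ 2 * (i : ℝ) ^ 2 * ((i : ℝ) - ρ) ^ 2 / 2 ≤ |ph m i - q| * |ph m i - y| := by
      calc kp ^ 2 * a2 ^ 2 * (i : ℝ) ^ 2 * ((i : ℝ) - ρ) ^ 2 / 2
          ≤ ((kp * a2 * (|(i : ℝ) - ρ| * (i + ρ)))) * (kp * a2 * (|(i : ℝ) - ρ| / 2 * (i + ρ))) := by
            rw [← sq_abs ((i : ℝ) - ρ)]
            have : (i : ℝ) ^ 2 ≤ (i + ρ) ^ 2 := by gcongr; linarith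
            have e : ((kp * a2 * (|(i : ℝ) - ρ| * (i + ρ)))) * (kp * a2 * (|(i : ℝ) - ρ| / 2 * (i + ρ)))
              = (kp ^ 2 * a2 ^ 2 * (i + ρ) ^ 2) * |(i : ℝ) - ρ| ^ 2 / 2 := by ring
            rw [e]; gcongr
        _ ≤ _ := mul_le_mul (le_trans (F1 i hi) (F3' i hi1 hi)) (F2 i hi) (by positivity) (abs_nonneg _)
    have hsq : 0 < ((i : ℝ) - ρ) ^ 2 := by rw [← sq_abs]; positivity
    have hti : ph m i ≤ a2 * (i : ℝ) ^ 2 := by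
      have := ph_diff_le m hm i 0 le_rfl hi0.le
      rw [ph_zero] at this
      calc ph m i ≤ a2 * ((i - 0) * (i + 0)) := by linarith
        _ = _ := by ring
    calc _ ≤ 1 / (kp ^ 2 * a2 ^ 2 * (i : ℝ) ^ 2 * ((i : ℝ) - ρ) ^ 2 / 2) * (a2 * (i : ℝ) ^ 2) := by
          apply mul_le_mul _ hti (ph_nonneg m i) (by positivity)
          apply div_le_div₀ (by norm_num) (bw_abs m i) (by positivity) hden
      _ = _ := by field_simp
  -- atoms
  set Bq : ℝ := ∑ i ∈ Finset.range (m + 1), bw m i * (1 / (q - ph m i)) with hBq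
  set By : ℝ := ∑ i ∈ Finset.range (m + 1), bw m i * (1 / (y - ph m i)) with hBy
  have hBq' : |Bq| ≤ 4 / (ε * E) := by
    rw [hBq, split_sum m r hr1]
    refine (abs_add_le _ _).trans ?_
    have b1 := (alt_left m r hr1 q h1).1
    have b2 := alt_right m r hr1 q (by linarith)
    have c1 : 1 / (q - ph m r) ≤ 1 / (ε * E / 2) := one_div_le_one_div_of_le (by positivity) dqr
    have c2 : 1 / (ph m (r + 1 : ℕ) - q) ≤ 1 / (ε * E / 2) := one_div_le_one_div_of_le (by positivity) (by nlinarith)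
    have e : 4 / (ε * E) = 1 / (ε * E / 2) + 1 / (ε * E / 2) := by field_simp; norm_num
    rw [e]; linarith
  have hBy' : |By| ≤ 4 / E := by
    rw [hBy, split_sum m r hr1]
    refine (abs_add_le _ _).trans ?_
    have b1 := (alt_left m r hr1 y (by linarith)).1
    have b2 := alt_right m r hr1 y (by linarith)
    have c1 : 1 / (y - ph m r) ≤ 1 / (E / 2) := one_div_le_one_div_of_le (by positivity) dyr
    have c2 : 1 / (ph m (r + 1 : ℕ) - y) ≤ 1 / (E / 2) := one_div_le_one_div_of_le (by positivity) dr1y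
    have e : 4 / E = 1 / (E / 2) + 1 / (E / 2) := by field_simp; norm_num
    rw [e]; linarith
  have hcq : |Bq / (q - y)| ≤ 8 / (ε * E ^ 2) := by
    rw [abs_div, abs_sub_comm, abs_of_pos (by linarith : 0 < y - q)]
    calc |Bq| / (y - q) ≤ (4 / (ε * E)) / (E / 2) := div_le_div₀ (by positivity) hBq' (by positivity) dyq
      _ = _ := by field_simp; norm_num
  have hcy : |By / (y - q)| ≤ 8 / E ^ 2 := by
    rw [abs_div, abs_of_pos (by linarith : 0 < y - q)]
    calc |By| / (y - q) ≤ (4 / E) / (E / 2) := div_le_div₀ (by positivity) hBy' (by positivity) dyq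
      _ = _ := by field_simp; norm_num
  have hcy2 : 8 / E ^ 2 ≤ 8 / (ε * E ^ 2) := by
    apply div_le_div_of_nonneg_left (by norm_num) (by positivity); nlinarith [sq_nonneg E]
  set nu : ℕ → ℝ := fun i => bw m i / ((ph m i - q) * (ph m i - y)) with hnu
  have hns := node_sum m r hr1
  rw [← hρ] at hns
  have sgn2 : ((-1 : ℝ) ^ r) * (-1) ^ r = 1 := by rw [← mul_pow]; norm_num
  have sgnabs : |(-1 : ℝ) ^ r| = 1 := by rw [abs_pow, abs_neg, abs_one, one_pow]
  have habs : ∀ z : ℝ, |(-1 : ℝ) ^ r * z| = |z| := fun z => by rw [abs_mul, sgnabs, one_mul]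
  have N1 : ∑ i ∈ Finset.range (m + 1), |nu i| ≤ 32 / (ε * E ^ 2) := by
    calc _ ≤ ∑ i ∈ Finset.range (m + 1), 2 / (ε * E ^ 2) * (1 / ((i : ℝ) - ρ) ^ 2) :=
          Finset.sum_le_sum fun i hi => W1 i (by have := Finset.mem_range.mp hi; omega)
      _ ≤ 2 / (ε * E ^ 2) * 16 := by rw [← Finset.mul_sum]; gcongr
      _ = _ := by ring
  have N2 : ∑ i ∈ Finset.range (m + 1), |nu i| * ph m i ≤ q * (32 / (ε * E ^ 2)) + 32 / (kp ^ 2 * a2) := by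
    calc _ ≤ ∑ i ∈ Finset.range (m + 1), (q * |nu i| + 2 / (kp ^ 2 * a2) * (1 / ((i : ℝ) - ρ) ^ 2)) := by
          refine Finset.sum_le_sum fun i hi => ?_
          have hi' : i ≤ m := by have := Finset.mem_range.mp hi; omega
          rcases Nat.lt_or_ge r i with h | h
          · have := W2 i h hi'
            have h0 : 0 ≤ q * |nu i| := by positivity
            linarith
          · have := tle i h
            have h0 : 0 ≤ 2 / (kp ^ 2 * a2) * (1 / ((i : ℝ) - ρ) ^ 2) := by positivity
            have : |nu i| * ph m i ≤ q * |nu i| := by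
              rw [mul_comm q]; gcongr; linarith
            linarith
      _ = q * ∑ i ∈ Finset.range (m + 1), |nu i| + 2 / (kp ^ 2 * a2) * ∑ i ∈ Finset.range (m + 1), (1 / ((i : ℝ) - ρ) ^ 2) := by
          rw [Finset.sum_add_distrib, Finset.mul_sum, Finset.mul_sum]
      _ ≤ q * (32 / (ε * E ^ 2)) + 2 / (kp ^ 2 * a2) * 16 := by gcongr
      _ = _ := by ring
  refine ⟨fun o => match o with
    | none => (-1) ^ r * (Bq / (q - y))
    | some none => (-1) ^ r * (By / (y - q))
    | some (some i) => (-1) ^ r * nu i, fun o => match o with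
    | none => q
    | some none => y
    | some (some i) => ph m (i : ℕ), ?_, ?_, ?_, ?_, ?_⟩
  · intro o
    match o with
    | none => exact ⟨hq0.le, h2.trans (ph_le_one _ _)⟩
    | some none => exact ⟨ph_nonneg _ _, ph_le_one _ _⟩
    | some (some i) => exact ⟨ph_nonneg _ _, ph_le_one _ _⟩
  · intro k hk'
    rw [Fintype.sum_option, Fintype.sum_option]
    simp only
    rw [Fin.sum_univ_eq_sum_range (fun i => (-1 : ℝ) ^ r * nu i * ph m i ^ k) (m + 1)]
    have := dd_zero q y (by linarith) k (Finset.range (m + 1)) (bw m) (fun i => ph m i)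
      (fun i hi => neq i (by have := Finset.mem_range.mp hi; omega))
      (fun i hi => ney i (by have := Finset.mem_range.mp hi; omega))
      (fun l hl => cheb m l (by omega))
    have e : ∑ i ∈ Finset.range (m + 1), bw m i * (ph m i ^ k / ((ph m i - q) * (ph m i - y)) + q ^ k / ((q - ph m i) * (q - y))
      + y ^ k / ((y - ph m i) * (y - q))) = ∑ i ∈ Finset.range (m + 1), nu i * ph m i ^ k + Bq / (q - y) * q ^ k + By / (y - q) * y ^ k := by
      rw [hBq, hBy, Finset.sum_div, Finset.sum_div, Finset.sum_mul, Finset.sum_mul, ← Finset.sum_add_distrib, ← Finset.sum_add_distrib]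
      refine Finset.sum_congr rfl fun i hi => ?_
      simp only [hnu, div_eq_mul_inv, mul_inv]; ring
    rw [e] at this
    calc _ = (-1) ^ r * (∑ i ∈ Finset.range (m + 1), nu i * ph m i ^ k + Bq / (q - y) * q ^ k + By / (y - q) * y ^ k) := by
          simp only [mul_assoc]
          rw [← Finset.mul_sum]; ring
      _ = 0 := by rw [this, mul_zero]
  · rw [Fintype.sum_option, Fintype.sum_option]
    simp only [habs]
    rw [Fin.sum_univ_eq_sum_range (fun i => |nu i|) (m + 1)]
    have : 48 / (ε * E ^ 2) = 8 / (ε * E ^ 2) + (8 / (ε * E ^ 2) + 32 / (ε * E ^ 2)) := by ring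
    rw [this]; linarith
  · rw [Fintype.sum_option, Fintype.sum_option]
    simp only [habs]
    rw [Fin.sum_univ_eq_sum_range (fun i => |nu i| * ph m i) (m + 1)]
    have hyu : y ≤ 9 / 4 * a2 * ρ ^ 2 := by
      have := ph_diff_le m hm (ρ + 1 / 4) 0 le_rfl (by linarith)
      rw [ph_zero] at this
      have h3 : (ρ + 1 / 4 - 0) * (ρ + 1 / 4 + 0) ≤ 9 / 4 * ρ ^ 2 := by nlinarith
      calc y ≤ a2 * ((ρ + 1 / 4 - 0) * (ρ + 1 / 4 + 0)) := by linarith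
        _ ≤ a2 * (9 / 4 * ρ ^ 2) := by gcongr
        _ = _ := by ring
    have hy2 : |By / (y - q)| * y ≤ 18 / (kp ^ 2 * a2) := by
      calc _ ≤ 8 / E ^ 2 * (9 / 4 * a2 * ρ ^ 2) := mul_le_mul hcy hyu (ph_nonneg _ _) (by positivity)
        _ = _ := by rw [hE2]; field_simp; norm_num
    have hPl : kp * a2 * ρ ^ 2 ≤ P := by
      have := ph_diff_ge m hm ρ 0 le_rfl hρ0.le (by linarith) (by linarith)
      rw [ph_zero] at this
      calc _ = kp * a2 * ((ρ - 0) * (ρ + 0)) := by ring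
        _ ≤ _ := by linarith
    have hεP : ε * P ≤ q := by
      have := ph_nonneg m r
      nlinarith
    have hfin : 50 / (kp ^ 2 * a2) ≤ q * ((50 / kp) / (ε * E ^ 2)) := by
      have h3 : ε * (kp * a2 * ρ ^ 2) ≤ q := le_trans (by gcongr) hεP
      calc 50 / (kp ^ 2 * a2) = (ε * (kp * a2 * ρ ^ 2)) * ((50 / kp) / (ε * E ^ 2)) := by
            rw [hE2]; field_simp
        _ ≤ _ := by gcongr
    have hqq : |Bq / (q - y)| * q ≤ q * (8 / (ε * E ^ 2)) := by
      rw [mul_comm]; gcongr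
    have e1 : q * ((40 + 50 / kp) / (ε * E ^ 2)) = q * (8 / (ε * E ^ 2)) + q * (32 / (ε * E ^ 2)) + q * ((50 / kp) / (ε * E ^ 2)) := by ring
    have e2 : 50 / (kp ^ 2 * a2) = 18 / (kp ^ 2 * a2) + 32 / (kp ^ 2 * a2) := by ring
    rw [e1]; rw [e2] at hfin; linarith
  · rw [Fintype.sum_option, Fintype.sum_option]
    simp only
    rw [Fin.sum_univ_eq_sum_range (fun i => (-1 : ℝ) ^ r * nu i * |ph m i - q|) (m + 1)]
    have hyq : |y - q| = y - q := abs_of_pos (by linarith)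
    have hyq0 : y - q ≠ 0 := by linarith
    obtain ⟨l1, l2, l3⟩ := alt_left m r hr1 y (by linarith)
    have e : ∑ i ∈ Finset.range (m + 1), nu i * |ph m i - q| + By = 2 * ∑ i ∈ Finset.range (r + 1), bw m i * (1 / (y - ph m i)) := by
      rw [hBy, ← Finset.sum_add_distrib, split_sum m r hr1]
      have s2 : ∑ l ∈ Finset.range (m - r - 1 + 1), (nu (r + 1 + l) * |ph m (r + 1 + l : ℕ) - q| + bw m (r + 1 + l) * (1 / (y - ph m (r + 1 + l : ℕ)))) = 0 := by
        refine Finset.sum_eq_zero fun l hl => ?_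
        have hl' := Finset.mem_range.mp hl
        have h3 := tge (r + 1 + l) (by omega) (by omega)
        have h4 : ph m (r + 1 + l : ℕ) - q ≠ 0 := by linarith
        have h5 : ph m (r + 1 + l : ℕ) - y ≠ 0 := by linarith
        rw [abs_of_nonneg (by linarith)]
        simp only [hnu]
        rw [← neg_sub (ph m (r + 1 + l : ℕ)) y]
        field_simp
        ring
      rw [s2, add_zero, Finset.mul_sum]
      refine Finset.sum_congr rfl fun i hi => ?_
      have h3 := tle i (by have := Finset.mem_range.mp hi; omega)
      have h4 : ph m i - q ≠ 0 := by linarith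
      have h5 : ph m i - y ≠ 0 := by linarith
      rw [abs_of_nonpos (by linarith)]
      simp only [hnu]
      rw [← neg_sub (ph m i) y]
      field_simp
      ring
    have e' : (-1) ^ r * (Bq / (q - y)) * |q - q| + ((-1) ^ r * (By / (y - q)) * |y - q| + ∑ i ∈ Finset.range (m + 1), (-1) ^ r * nu i * |ph m i - q|)
        = 2 * |∑ i ∈ Finset.range (r + 1), bw m i * (1 / (y - ph m i))| := by
      rw [sub_self, abs_zero, mul_zero, zero_add, hyq]
      have : |∑ i ∈ Finset.range (r + 1), bw m i * (1 / (y - ph m i))| = (-1) ^ r * ∑ i ∈ Finset.range (r + 1), bw m i * (1 / (y - ph m i)) := by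
        rw [← abs_of_nonneg l3, habs]
      rw [this, mul_left_comm, ← e]
      simp only [mul_assoc]
      rw [← Finset.mul_sum, div_mul_cancel₀ _ hyq0]; ring
    rw [e']
    have hgoal : kp ^ 2 / (3 * E) = kp / (3 * a2 * ρ) := by
      rw [hE]; field_simp
    rw [hgoal]
    rcases Nat.eq_zero_or_pos r with h0 | h0
    · subst h0
      have hy3 : y ≤ 9 / 16 * a2 := by
        have := ph_diff_le m hm (ρ + 1 / 4) 0 le_rfl (by linarith)
        rw [ph_zero] at this
        simp at hρ
        rw [hρ] at this
        calc y ≤ a2 * ((2⁻¹ + 1 / 4 - 0) * (2⁻¹ + 1 / 4 + 0)) := by rw [hy, hρ]; linarith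
          _ = _ := by ring
      have hy0 : 0 < y := by linarith
      have : ∑ i ∈ Finset.range (0 + 1), bw m i * (1 / (y - ph m i)) = 1 / 2 * (1 / y) := by
        simp [bw, ph_zero]
      rw [this, abs_of_pos (by positivity)]
      have hρ' : ρ = 1 / 2 := by simp [hρ]
      rw [hρ']
      have hk2 := kp_le
      calc kp / (3 * a2 * (1 / 2)) ≤ 1 / (9 / 16 * a2) := by
            rw [div_le_div_iff₀ (by positivity) (by positivity)]; nlinarith
        _ ≤ 1 / y := one_div_le_one_div_of_le hy0 hy3
        _ = _ := by ring
    · have l2' := l2 h0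
      have hcast : ((r - 1 : ℕ) : ℝ) = r - 1 := by rw [Nat.cast_sub h0]; simp
      rw [hcast] at l2'
      have hr1' : (1 : ℝ) ≤ r := by exact_mod_cast h0
      have u1 : kp * a2 * (2 * r - 1) ≤ ph m r - ph m (r - 1) := by
        have := ph_diff_ge m hm r (r - 1) (by linarith) (by linarith) (by linarith) (by linarith)
        calc _ = kp * a2 * ((r - (r - 1)) * (r + (r - 1))) := by ring
          _ ≤ _ := this
      have u2 : y - ph m r ≤ a2 * (3 / 4 * (2 * r + 3 / 4)) := by
        have := ph_diff_le m hm (ρ + 1 / 4) r (by linarith) (by linarith)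
        calc _ ≤ a2 * ((ρ + 1 / 4 - r) * (ρ + 1 / 4 + r)) := this
          _ = _ := by rw [hρ]; ring
      have u3 : y - ph m (r - 1) ≤ a2 * (7 / 4 * (2 * r - 1 / 4)) := by
        have := ph_diff_le m hm (ρ + 1 / 4) (r - 1) (by linarith) (by linarith)
        calc _ ≤ a2 * ((ρ + 1 / 4 - (r - 1)) * (ρ + 1 / 4 + (r - 1))) := this
          _ = _ := by rw [hρ]; ring
      have v0 : 0 ≤ ph m r - ph m (r - 1) := le_trans (by apply mul_nonneg (by positivity); linarith) u1
      have v2 : 0 < y - ph m r := by linarith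
      have v3 : 0 < y - ph m (r - 1) := by linarith
      have e3 : 1 / (y - ph m r) - 1 / (y - ph m (r - 1)) = (ph m r - ph m (r - 1)) / ((y - ph m r) * (y - ph m (r - 1))) := by
        rw [div_sub_div _ _ v2.ne' v3.ne']; congr 1; ring
      have h6 : kp / (6 * a2 * ρ) ≤ 1 / (y - ph m r) - 1 / (y - ph m (r - 1)) := by
        rw [e3]
        have z1 : (y - ph m r) * (y - ph m (r - 1)) ≤ a2 * (3 / 4 * (2 * r + 3 / 4)) * (a2 * (7 / 4 * (2 * r - 1 / 4))) :=
          mul_le_mul u2 u3 v3.le (le_trans v2.le u2)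
        calc kp / (6 * a2 * ρ) ≤ (kp * a2 * (2 * r - 1)) / (a2 * (3 / 4 * (2 * r + 3 / 4)) * (a2 * (7 / 4 * (2 * r - 1 / 4)))) := by
              have z2 : 0 < a2 * (3 / 4 * (2 * r + 3 / 4)) * (a2 * (7 / 4 * (2 * r - 1 / 4))) := lt_of_lt_of_le (by positivity) z1
              rw [div_le_div_iff₀ (by positivity) z2, hρ]
              have z3 : (3 / 4 * (2 * (r : ℝ) + 3 / 4)) * ((7 / 4 * (2 * r - 1 / 4))) ≤ (2 * r - 1) * (6 * (r + 1 / 2)) := by nlinarith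
              calc _ = kp * a2 ^ 2 * ((3 / 4 * (2 * (r : ℝ) + 3 / 4)) * ((7 / 4 * (2 * r - 1 / 4)))) := by ring
                _ ≤ kp * a2 ^ 2 * ((2 * r - 1) * (6 * (r + 1 / 2))) := by gcongr
                _ = _ := by ring
          _ ≤ _ := div_le_div₀ v0 u1 (by positivity) z1
      have e4 : kp / (3 * a2 * ρ) = 2 * (kp / (6 * a2 * ρ)) := by field_simp; norm_num
      rw [e4]; linarith

lemma make_prior {κ : Type} [Fintype κ] (m : ℕ) (hm : 2 ≤ m) (q : ℝ) (hq0 : 0 ≤ q) (hq : q ≤ 1 / 2)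
    (ν x : κ → ℝ) (hx : ∀ i, 0 ≤ x i ∧ x i ≤ 1) (hmom : ∀ k, k < m → ∑ i, ν i * x i ^ k = 0)
    (h1 : ∑ i, |ν i| ≤ 1 / 2) (h2 : ∑ i, |ν i| * x i ≤ q / 2) :
    ∃ w0 w1 z : Option κ → ℝ, (∀ i, 0 ≤ w0 i) ∧ (∀ i, 0 ≤ w1 i) ∧ ∑ i, w0 i = 1 ∧ ∑ i, w1 i = 1 ∧
      (∀ i, 0 ≤ z i ∧ z i ≤ 1) ∧ ∑ i, w0 i * z i = q ∧ ∑ i, w1 i * z i = q ∧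
      (∀ k, k < m → ∑ i, w1 i * z i ^ k = ∑ i, w0 i * z i ^ k) ∧
      ∑ i, (w1 i - w0 i) * |z i - q| = ∑ i, ν i * |x i - q| := by
  set P : κ → ℝ := fun i => (|ν i| + ν i) / 2 with hP
  set N : κ → ℝ := fun i => (|ν i| - ν i) / 2 with hN
  have hP0 : ∀ i, 0 ≤ P i := fun i => by have := neg_abs_le (ν i); simp only [hP]; linarith
  have hN0 : ∀ i, 0 ≤ N i := fun i => by have := le_abs_self (ν i); simp only [hN]; linarith
  have hPN : ∀ i, P i - N i = ν i := fun i => by simp only [hP, hN]; ring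
  have hPNa : ∀ i, P i + N i = |ν i| := fun i => by simp only [hP, hN]; ring
  have hmm : ∀ k, k < m → ∑ i, P i * x i ^ k = ∑ i, N i * x i ^ k := by
    intro k hk
    rw [← sub_eq_zero, ← Finset.sum_sub_distrib, ← hmom k hk]
    exact Finset.sum_congr rfl fun i _ => by rw [← hPN]; ring
  have m0 : ∑ i, P i = ∑ i, N i := by simpa using hmm 0 (by omega)
  have m1 : ∑ i, P i * x i = ∑ i, N i * x i := by simpa using hmm 1 (by omega)
  have s0 : ∑ i, P i + ∑ i, N i = ∑ i, |ν i| := by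
    rw [← Finset.sum_add_distrib]; exact Finset.sum_congr rfl fun i _ => hPNa i
  have s1 : ∑ i, P i * x i + ∑ i, N i * x i = ∑ i, |ν i| * x i := by
    rw [← Finset.sum_add_distrib]; exact Finset.sum_congr rfl fun i _ => by rw [← hPNa]; ring
  set a := ∑ i, P i with ha
  set b := ∑ i, P i * x i with hb
  have hb0 : 0 ≤ b := Finset.sum_nonneg fun i _ => mul_nonneg (hP0 i) (hx i).1
  have ha1 : a ≤ 1 / 4 := by linarith
  have hb1 : b ≤ q / 4 := by linarith
  set t := (q - b) / (1 - a) with ht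
  have hat : (1 - a) * t = q - b := by rw [ht]; field_simp [show (1 - a) ≠ 0 by linarith]
  have ht0 : 0 ≤ t := div_nonneg (by linarith) (by linarith)
  have ht1 : t ≤ 1 := by rw [ht, div_le_one (by linarith)]; linarith
  refine ⟨fun o => o.elim (1 - a) N, fun o => o.elim (1 - a) P, fun o => o.elim t x, ?_, ?_, ?_, ?_, ?_, ?_, ?_, ?_, ?_⟩
  · rintro (_ | i)
    · simp; linarith
    · exact hN0 i
  · rintro (_ | i)
    · simp; linarith
    · exact hP0 i
  · rw [Fintype.sum_option]; simp [← m0]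
  · rw [Fintype.sum_option]; simp [← ha]
  · rintro (_ | i)
    · exact ⟨ht0, ht1⟩
    · exact hx i
  · rw [Fintype.sum_option]; simp only [Option.elim]; rw [← m1, hat]; ring
  · rw [Fintype.sum_option]; simp only [Option.elim]; rw [← hb, hat]; ring
  · intro k hk
    rw [Fintype.sum_option, Fintype.sum_option]; simp only [Option.elim]; rw [hmm k hk]
  · rw [Fintype.sum_option]; simp only [Option.elim, sub_self, zero_mul, zero_add, hPN]

/-- index type of the priors -/
abbrev Idx (m : ℕ) := Option (Option (Option (Fin (m + 1))))

noncomputable def c0 : ℝ := kp ^ 3 / (6 * (48 + 50 / kp))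

lemma c0_pos : 0 < c0 := by
  have := kp_pos
  unfold c0; positivity

lemma prior_pair (m r : ℕ) (hm : 2 ≤ m) (hr : 2 * r + 1 ≤ m) (q ε : ℝ) (hq : q ≤ 1 / 2)
    (h1 : ph m r < q) (h2 : q ≤ ph m (r + 1 / 2))
    (hε : ε = (q - ph m r) / (ph m (r + 1 / 2) - ph m r)) :
    ∃ w0 w1 z : Idx m → ℝ, (∀ i, 0 ≤ w0 i) ∧ (∀ i, 0 ≤ w1 i) ∧ ∑ i, w0 i = 1 ∧ ∑ i, w1 i = 1 ∧
      (∀ i, 0 ≤ z i ∧ z i ≤ 1) ∧ ∑ i, w0 i * z i = q ∧ ∑ i, w1 i * z i = q ∧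
      (∀ k, k < m → ∑ i, w1 i * z i ^ k = ∑ i, w0 i * z i ^ k) ∧
      c0 * (ε * al m ^ 2 * (r + 1 / 2)) ≤ ∑ i, (w1 i - w0 i) * |z i - q| := by
  obtain ⟨ν, x, hx, hmom, b1, b2, b3⟩ := core_raw m r hr q ε _ h1 h2 hε rfl
  set E := kp * al m ^ 2 * (r + 1 / 2) with hE
  have hk := kp_pos
  have ha := al_pos m (by omega)
  have hE0 : 0 < E := by positivity
  have hε0 : 0 < ε := by rw [hε]; apply div_pos <;> linarith
  have hq0 : 0 < q := lt_of_le_of_lt (ph_nonneg m r) h1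
  set K := 48 + 50 / kp with hK
  have hK0 : 0 < K := by positivity
  set s := ε * E ^ 2 / (2 * K) with hs
  have hs0 : 0 < s := by positivity
  obtain ⟨w0, w1, z, p1, p2, p3, p4, p5, p6, p7, p8, p9⟩ := make_prior m hm q hq0.le hq (fun i => s * ν i) x hx
    (fun k hk => by simp only [mul_assoc]; rw [← Finset.mul_sum, hmom k hk, mul_zero])
    (by
      simp only [abs_mul, abs_of_pos hs0]; rw [← Finset.mul_sum]
      calc _ ≤ s * (48 / (ε * E ^ 2)) := by gcongr
        _ = 1 / 2 * (48 / K) := by rw [hs]; field_simp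
        _ ≤ 1 / 2 * 1 := by
          gcongr; rw [div_le_one hK0, hK]; have : 0 < 50 / kp := by positivity
          linarith
        _ = _ := by ring)
    (by
      simp only [abs_mul, abs_of_pos hs0, mul_assoc]; rw [← Finset.mul_sum]
      calc _ ≤ s * (q * ((40 + 50 / kp) / (ε * E ^ 2))) := by gcongr
        _ = q / 2 * ((40 + 50 / kp) / K) := by rw [hs]; field_simp
        _ ≤ q / 2 * 1 := by
          gcongr; rw [div_le_one hK0, hK]; have : 0 < 50 / kp := by positivity
          linarith
        _ = _ := by ring)
  refine ⟨w0, w1, z, p1, p2, p3, p4, p5, p6, p7, p8, ?_⟩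
  rw [p9]
  simp only [mul_assoc]; rw [← Finset.mul_sum]
  calc _ = s * (kp ^ 2 / (3 * E)) := by
        rw [hs, c0, ← hK]
        have : kp ^ 3 / (6 * K) * (ε * (al m ^ 2 * (r + 1 / 2))) = kp ^ 2 * ε * E / (6 * K) := by rw [hE]; ring
        rw [this]; field_simp; norm_num
    _ ≤ _ := by gcongr

lemma prior_A (m r : ℕ) (hm : 2 ≤ m) (hr : 2 * r + 1 ≤ m) (q : ℝ) (hq : q = ph m (r + 1 / 2)) :
    ∃ w0 w1 z : Idx m → ℝ, (∀ i, 0 ≤ w0 i) ∧ (∀ i, 0 ≤ w1 i) ∧ ∑ i, w0 i = 1 ∧ ∑ i, w1 i = 1 ∧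
      (∀ i, 0 ≤ z i ∧ z i ≤ 1) ∧ ∑ i, w0 i * z i = q ∧ ∑ i, w1 i * z i = q ∧
      (∀ k, k < m → ∑ i, w1 i * z i ^ k = ∑ i, w0 i * z i ^ k) ∧
      c0 * (al m * Real.sqrt q) ≤ ∑ i, (w1 i - w0 i) * |z i - q| := by
  have hmR : (2 : ℝ) ≤ m := by exact_mod_cast hm
  have hrR : 2 * (r : ℝ) + 1 ≤ m := by exact_mod_cast hr
  have hr0 : (0 : ℝ) ≤ r := by positivity
  have ha := al_pos m (by omega)
  have hk := kp_pos
  have hlt : ph m r < q := by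
    have := ph_diff_ge m (by omega) (r + 1 / 2) r hr0 (by linarith) (by linarith) (by linarith)
    have h : 0 < kp * al m ^ 2 * (((r : ℝ) + 1 / 2 - r) * (r + 1 / 2 + r)) := by
      have : (0 : ℝ) < ((r : ℝ) + 1 / 2 - r) * (r + 1 / 2 + r) := by nlinarith
      positivity
    rw [hq]; linarith
  have hq2 : q ≤ 1 / 2 := by
    have h5 := ph_mono m (by omega) (m / 2) (r + 1 / 2) (by linarith) (by linarith) (by linarith)
    rw [ph_half m (by omega), ← hq] at h5
    exact h5
  obtain ⟨w0, w1, z, p1, p2, p3, p4, p5, p6, p7, p8, p9⟩ := prior_pair m r hm hr q 1 hq2 hlt hq.le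
    (by rw [← hq, div_self (by linarith)])
  refine ⟨w0, w1, z, p1, p2, p3, p4, p5, p6, p7, p8, le_trans ?_ p9⟩
  have : Real.sqrt q ≤ al m * (r + 1 / 2) := by
    apply Real.sqrt_le_iff.mpr ⟨by positivity, ?_⟩
    have := ph_diff_le m (by omega) (r + 1 / 2) 0 le_rfl (by linarith)
    rw [ph_zero, ← hq] at this
    nlinarith
  have h0 := c0_pos
  calc _ ≤ c0 * (al m * (al m * (r + 1 / 2))) := by gcongr
    _ = _ := by ring

lemma prior_B (m : ℕ) (hm : 2 ≤ m) (q : ℝ) (hq0 : 0 < q) (hq : q ≤ ph m (1 / 2)) :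
    ∃ w0 w1 z : Idx m → ℝ, (∀ i, 0 ≤ w0 i) ∧ (∀ i, 0 ≤ w1 i) ∧ ∑ i, w0 i = 1 ∧ ∑ i, w1 i = 1 ∧
      (∀ i, 0 ≤ z i ∧ z i ≤ 1) ∧ ∑ i, w0 i * z i = q ∧ ∑ i, w1 i * z i = q ∧
      (∀ k, k < m → ∑ i, w1 i * z i ^ k = ∑ i, w0 i * z i ^ k) ∧
      c0 * q ≤ ∑ i, (w1 i - w0 i) * |z i - q| := by
  have hmR : (2 : ℝ) ≤ m := by exact_mod_cast hm
  have ha := al_pos m (by omega)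
  have hq2 : q ≤ 1 / 2 := by
    have h5 := ph_mono m (by omega) (m / 2) (1 / 2) (by linarith) (by linarith) (by linarith)
    rw [ph_half m (by omega)] at h5
    exact hq.trans h5
  obtain ⟨w0, w1, z, p1, p2, p3, p4, p5, p6, p7, p8, p9⟩ := prior_pair m 0 hm (by omega) q (q / ph m (1 / 2)) hq2
    (by simpa [ph_zero] using hq0) (by simpa using hq)
    (by simp [ph_zero])
  refine ⟨w0, w1, z, p1, p2, p3, p4, p5, p6, p7, p8, le_trans ?_ p9⟩
  have h0 := c0_pos
  have := ph_diff_le m (by omega) (1 / 2) 0 le_rfl (by linarith)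
  rw [ph_zero] at this
  have hp : 0 < ph m (1 / 2) := by linarith
  gcongr
  rw [div_mul_eq_mul_div, div_mul_eq_mul_div, le_div_iff₀ hp]
  push_cast
  nlinarith

noncomputable def KK : ℝ := 9 / kp

lemma KK_ge : 18 ≤ KK := by
  have h1 := kp_pos
  have h2 := kp_le
  unfold KK; rw [le_div_iff₀ h1]; linarith

/-- per-coordinate prior -/
structure CP (m : ℕ) (N L q c1 : ℝ) (w : Bool → Idx m → ℝ) (u : Idx m → ℝ) (a : ℝ) : Prop where
  nonneg : ∀ b i, 0 ≤ w b i
  sum_one : ∀ b, ∑ i, w b i = 1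
  mean : ∀ b, ∑ i, w b i * u i = 0
  mom : ∀ k, k < m → ∑ i, w true i * (u i - a) ^ k = ∑ i, w false i * (u i - a) ^ k
  lower : ∀ i, -(q / 2) ≤ u i
  ub : ∀ i, |u i| ≤ KK * Real.sqrt (L / N)
  var : ∀ b, ∑ i, w b i * u i ^ 2 ≤ KK * q * (L / N)
  gap : c1 * min q (Real.sqrt (q / (N * L))) ≤ ∑ i, (w true i - w false i) * |u i|
  a_nonneg : 0 ≤ a
  a_pos : 0 < a + 3 * q / 4
  a_le : |a| ≤ KK * Real.sqrt (L / N)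
  bound : ∀ i, N * ((u i - a) ^ 2 * (1 / (a + 3 * q / 4) + 4)) ≤ 2 * KK * L

lemma affine_mom {κ : Type} [Fintype κ] (m : ℕ) (w1 w0 z : κ → ℝ) (α β : ℝ)
    (h : ∀ k, k < m → ∑ i, w1 i * z i ^ k = ∑ i, w0 i * z i ^ k) (k : ℕ) (hk : k < m) :
    ∑ i, w1 i * (α * z i + β) ^ k = ∑ i, w0 i * (α * z i + β) ^ k := by
  have key : ∀ w : κ → ℝ, ∑ i, w i * (α * z i + β) ^ k =
      ∑ l ∈ Finset.range (k + 1), α ^ l * β ^ (k - l) * (k.choose l) * ∑ i, w i * z i ^ l := by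
    intro w
    simp only [add_pow, Finset.mul_sum]
    rw [Finset.sum_comm]
    refine Finset.sum_congr rfl fun l _ => Finset.sum_congr rfl fun i _ => ?_
    rw [mul_pow]; ring
  rw [key, key]
  refine Finset.sum_congr rfl fun l hl => ?_
  rw [h l (by have := Finset.mem_range.mp hl; omega)]

lemma var_le {κ : Type} [Fintype κ] (w z : κ → ℝ) (M q : ℝ) (hw : ∀ i, 0 ≤ w i) (h1 : ∑ i, w i = 1)
    (hz : ∀ i, 0 ≤ z i ∧ z i ≤ 1) (hq : ∑ i, w i * z i = q) :
    ∑ i, w i * (M * (z i - q)) ^ 2 ≤ M ^ 2 * q := by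
  have : ∑ i, w i * (M * (z i - q)) ^ 2 = M ^ 2 * (∑ i, w i * z i ^ 2 - 2 * q * ∑ i, w i * z i + q ^ 2 * ∑ i, w i) := by
    simp only [Finset.mul_sum, mul_sub, mul_add]
    rw [← Finset.sum_sub_distrib, ← Finset.sum_add_distrib]
    exact Finset.sum_congr rfl fun i _ => by ring
  rw [this, h1, hq]
  have h2 : ∑ i, w i * z i ^ 2 ≤ ∑ i, w i * z i := Finset.sum_le_sum fun i _ => by
    have := hz i
    exact mul_le_mul_of_nonneg_left (by nlinarith) (hw i)
  gcongr
  nlinarith [sq_nonneg q]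

lemma CP_mk (m : ℕ) (N L q c1 M q' a : ℝ) (w0 w1 z : Idx m → ℝ)
    (p1 : ∀ i, 0 ≤ w0 i) (p2 : ∀ i, 0 ≤ w1 i) (p3 : ∑ i, w0 i = 1) (p4 : ∑ i, w1 i = 1)
    (p5 : ∀ i, 0 ≤ z i ∧ z i ≤ 1) (p6 : ∑ i, w0 i * z i = q') (p7 : ∑ i, w1 i * z i = q')
    (p8 : ∀ k, k < m → ∑ i, w1 i * z i ^ k = ∑ i, w0 i * z i ^ k)
    (hM : 0 ≤ M) (hq' : q' ≤ 1) (hMq : M * q' ≤ q / 2) (hMW : M ≤ KK * Real.sqrt (L / N))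
    (hv : M ^ 2 * q' ≤ KK * q * (L / N))
    (hg : c1 * min q (Real.sqrt (q / (N * L))) ≤ M * ∑ i, (w1 i - w0 i) * |z i - q'|)
    (ha : 0 ≤ a) (ha' : 0 < a + 3 * q / 4) (haM : a ≤ M)
    (hb : ∀ i, N * ((M * (z i - q') - a) ^ 2 * (1 / (a + 3 * q / 4) + 4)) ≤ 2 * KK * L) :
    CP m N L q c1 (fun b => if b then w1 else w0) (fun i => M * (z i - q')) a := by
  have hq0 : 0 ≤ q' := by rw [← p6]; exact Finset.sum_nonneg fun i _ => mul_nonneg (p1 i) (p5 i).1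
  have hmean : ∀ w : Idx m → ℝ, ∑ i, w i = 1 → ∑ i, w i * z i = q' → ∑ i, w i * (M * (z i - q')) = 0 := by
    intro w h1 h2
    have : ∑ i, w i * (M * (z i - q')) = M * (∑ i, w i * z i - q' * ∑ i, w i) := by
      simp only [Finset.mul_sum, mul_sub]
      rw [← Finset.sum_sub_distrib]
      exact Finset.sum_congr rfl fun i _ => by ring
    rw [this, h1, h2]; ring
  refine ⟨?_, ?_, ?_, ?_, ?_, ?_, ?_, ?_, ha, ha', ?_, hb⟩
  · rintro (_ | _) i
    · exact p1 i
    · exact p2 i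
  · rintro (_ | _)
    · exact p3
    · exact p4
  · rintro (_ | _)
    · exact hmean _ p3 p6
    · exact hmean _ p4 p7
  · intro k hk
    have := affine_mom m w1 w0 z M (-(M * q') - a) p8 k hk
    simp only [if_true, Bool.false_eq_true, if_false]
    have e : ∀ i, M * (z i - q') - a = M * z i + (-(M * q') - a) := fun i => by ring
    simp only [e]
    exact this
  · intro i
    have := (p5 i).1
    have : 0 ≤ M * z i := by positivity
    nlinarith
  · intro i
    refine le_trans ?_ hMW
    rw [abs_mul, abs_of_nonneg hM]
    have : |z i - q'| ≤ 1 := by rw [abs_le]; have := p5 i; constructor <;> linarith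
    nlinarith
  · rintro (_ | _)
    · exact (var_le w0 z M q' p1 p3 p5 p6).trans hv
    · exact (var_le w1 z M q' p2 p4 p5 p7).trans hv
  · refine hg.trans (le_of_eq ?_)
    rw [Finset.mul_sum]
    refine Finset.sum_congr rfl fun i _ => ?_
    simp only [if_true, Bool.false_eq_true, if_false]
    rw [abs_mul, abs_of_nonneg hM]; ring
  · rw [abs_of_nonneg ha]; linarith

lemma select_r (m : ℕ) (hm : 2 ≤ m) (hodd : Odd m) (Y : ℝ) (h1 : ph m (1 / 2) ≤ Y) (h2 : Y ≤ 1 / 2) :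
    ∃ r : ℕ, 2 * r + 1 ≤ m ∧ ph m (r + 1 / 2) ≤ Y ∧ Y ≤ KK * ph m (r + 1 / 2) := by
  classical
  have hk := kp_pos
  have hKK := KK_ge
  set r := Nat.findGreatest (fun r => 2 * r + 1 ≤ m ∧ ph m (r + 1 / 2) ≤ Y) m with hr
  have h0 : (2 * 0 + 1 ≤ m ∧ ph m (((0 : ℕ) : ℝ) + 1 / 2) ≤ Y) := ⟨by omega, by simpa using h1⟩
  have hspec := Nat.findGreatest_spec (P := fun r => 2 * r + 1 ≤ m ∧ ph m ((r : ℝ) + 1 / 2) ≤ Y) (Nat.zero_le m) h0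
  rw [← hr] at hspec
  refine ⟨r, hspec.1, hspec.2, ?_⟩
  obtain ⟨hs1, hs2⟩ := hspec
  have hs1R : 2 * (r : ℝ) + 1 ≤ m := by exact_mod_cast hs1
  have hr0 : (0 : ℝ) ≤ r := by positivity
  have ha := al_pos m (by omega)
  by_cases h : 2 * (r + 1) + 1 ≤ m
  · have hn := Nat.findGreatest_is_greatest (P := fun r => 2 * r + 1 ≤ m ∧ ph m ((r : ℝ) + 1 / 2) ≤ Y) (n := m) (k := r + 1)
      (by rw [← hr]; omega) (by omega)
    have hY : Y < ph m (((r + 1 : ℕ) : ℝ) + 1 / 2) := by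
      by_contra hc; exact hn ⟨h, not_lt.mp hc⟩
    push_cast at hY
    have u := ph_diff_le m (by omega) (r + 1 + 1 / 2) 0 le_rfl (by linarith)
    have v := ph_diff_ge m (by omega) (r + 1 / 2) 0 le_rfl (by linarith) (by linarith) (by linarith)
    rw [ph_zero] at u v
    have e : al m ^ 2 * ((r + 1 + 1 / 2 - 0) * (r + 1 + 1 / 2 + 0)) ≤ KK * (kp * al m ^ 2 * ((r + 1 / 2 - 0) * (r + 1 / 2 + 0))) := by
      have : KK * (kp * al m ^ 2 * (((r : ℝ) + 1 / 2 - 0) * (r + 1 / 2 + 0))) = al m ^ 2 * (9 * ((r + 1 / 2) * (r + 1 / 2))) := by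
        unfold KK; field_simp; ring
      rw [this]; apply mul_le_mul_of_nonneg_left _ (by positivity); nlinarith
    have : KK * (kp * al m ^ 2 * (((r : ℝ) + 1 / 2 - 0) * (r + 1 / 2 + 0))) ≤ KK * ph m (r + 1 / 2) := by
      gcongr; linarith
    linarith
  · have hm2 : m = 2 * r + 1 := by
      obtain ⟨t, ht⟩ := hodd
      omega
    have : ph m (r + 1 / 2) = 1 / 2 := by
      have e : (r : ℝ) + 1 / 2 = m / 2 := by rw [hm2]; push_cast; ring
      rw [e]; exact ph_half m (by omega)
    rw [this]; linarith

lemma al_ge (m : ℕ) (hm : 2 ≤ m) (κ L : ℝ) (hL : 0 < L) (hκ : 1 ≤ κ) (hmL : m ≤ κ * L) : 1 / (κ * L) ≤ al m := by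
  have hm0 : (0 : ℝ) < m := by exact_mod_cast (by omega : 0 < m)
  have := Real.pi_gt_three
  unfold al
  rw [div_le_div_iff₀ (by positivity) (by positivity)]
  nlinarith

lemma gapA (c κ N L q M q' al' G : ℝ) (hc : 0 < c) (hκ : 1 ≤ κ) (hN : 0 < N) (hL : 0 < L) (hq : 0 < q) (hM : 0 < M)
    (hal : 1 / (κ * L) ≤ al') (hMq : q * (L / N) ≤ 4 * (M ^ 2 * q'))
    (hG : c * (al' * Real.sqrt q') ≤ G) :
    c / (2 * κ) * min q (Real.sqrt (q / (N * L))) ≤ M * G := by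
  have hκ0 : 0 < κ := by linarith
  have s1 : Real.sqrt (q / (N * L)) = Real.sqrt (q * (L / N)) / L := by
    have e : q * (L / N) = q / (N * L) * L ^ 2 := by field_simp
    rw [eq_div_iff hL.ne', e, Real.sqrt_mul (by positivity), Real.sqrt_sq hL.le]
  have s2 : Real.sqrt (q * (L / N)) ≤ 2 * M * Real.sqrt q' := by
    calc _ ≤ Real.sqrt (4 * (M ^ 2 * q')) := Real.sqrt_le_sqrt hMq
      _ = _ := by
        rw [show 4 * (M ^ 2 * q') = (2 * M) ^ 2 * q' by ring, Real.sqrt_mul (by positivity), Real.sqrt_sq (by positivity)]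
  calc _ ≤ c / (2 * κ) * (2 * M * Real.sqrt q' / L) := by
        gcongr
        refine (min_le_right _ _).trans ?_
        rw [s1]; gcongr
    _ = M * (c * (1 / (κ * L) * Real.sqrt q')) := by field_simp
    _ ≤ M * (c * (al' * Real.sqrt q')) := by gcongr
    _ ≤ _ := by gcongr

set_option maxHeartbeats 2000000 in
lemma coord_prior (m : ℕ) (hm : 2 ≤ m) (hodd : Odd m) (N L κ q : ℝ) (hN : 0 < N) (hL : 0 < L) (hκ : 1 ≤ κ)
    (hmL : m ≤ κ * L) (hW : KK * Real.sqrt (L / N) ≤ 1 / 4) (hq0 : 0 ≤ q) (hq1 : q ≤ 1) :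
    ∃ w u a, CP m N L q (c0 / (2 * κ)) w u a := by
  have hKK := KK_ge
  have hc0 := c0_pos
  have hal := al_ge m hm κ L hL hκ hmL
  have hLN : 0 < L / N := by positivity
  have hs0 : 0 < Real.sqrt (L / N) := Real.sqrt_pos.mpr hLN
  have hsq : L / N = Real.sqrt (L / N) ^ 2 := (Real.sq_sqrt hLN.le).symm
  have hs1 : Real.sqrt (L / N) ≤ 1 := by nlinarith
  have hLs : L / N ≤ Real.sqrt (L / N) := by nlinarith
  have hKKW : KK * (L / N) ≤ KK * Real.sqrt (L / N) := by gcongr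
  have hsmallb : ∀ M, 0 < M → M ≤ KK * (L / N) → ∀ q' t : ℝ, 0 ≤ t → t ≤ 1 → M * q' = q / 2 →
      N * ((M * (t - q') - (M - q / 2)) ^ 2 * (1 / (M - q / 2 + 3 * q / 4) + 4)) ≤ 2 * KK * L := by
    intro M hM hM2 q' t ht0 ht1 hMq
    have e : M * (t - q') - (M - q / 2) = M * (t - 1) := by rw [← hMq]; ring
    rw [e]
    have b1 : (M * (t - 1)) ^ 2 ≤ M ^ 2 := by
      rw [mul_pow]
      have : (t - 1) ^ 2 ≤ 1 := by nlinarith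
      nlinarith [sq_nonneg M]
    have b2 : 1 / (M - q / 2 + 3 * q / 4) ≤ 1 / M := one_div_le_one_div_of_le hM (by linarith)
    have b3 : 0 < M - q / 2 + 3 * q / 4 := by linarith
    calc _ ≤ N * (M ^ 2 * (1 / M + 4)) := by gcongr
      _ = N * (M + 4 * M * M) := by field_simp
      _ ≤ N * (2 * (KK * (L / N))) := by gcongr; nlinarith
      _ = _ := by field_simp
  rcases hq0.eq_or_lt with h0 | h0
  · -- q = 0
    subst h0
    obtain ⟨w0, w1, z, p1, p2, p3, p4, p5, p6, p7, p8, p9⟩ := prior_A m 0 hm (by omega) _ rfl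
    refine ⟨fun _ => w0, fun _ => 0, L / N, ?_⟩
    refine ⟨fun b => p1, fun b => p3, by simp, by simp, by simp, by simp; positivity, by simp, by simp, hLN.le, by linarith, ?_, ?_⟩
    · rw [abs_of_pos hLN]; nlinarith
    · intro i
      have := hsmallb (L / N) hLN (by nlinarith) 0 0 le_rfl (by norm_num) (by ring)
      simpa using this
  rcases le_or_gt q (L / N) with hs | hs
  · set Y := q / (2 * (L / N)) with hY
    have hY2 : Y ≤ 1 / 2 := by rw [hY, div_le_iff₀ (by positivity)]; linarith
    have hY0 : 0 < Y := by positivity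
    have hMY : (L / N) * Y = q / 2 := by rw [hY]; field_simp
    rcases le_or_gt Y (ph m (1 / 2)) with hB | hA
    · obtain ⟨w0, w1, z, p1, p2, p3, p4, p5, p6, p7, p8, p9⟩ := prior_B m hm Y hY0 hB
      refine ⟨_, _, L / N - q / 2, CP_mk m N L q _ (L / N) Y (L / N - q / 2) w0 w1 z p1 p2 p3 p4 p5 p6 p7 p8 hLN.le (by linarith) hMY.le
        (by nlinarith) ?_ ?_ (by linarith) (by linarith) (by linarith) ?_⟩
      · rw [sq, mul_assoc, hMY]; nlinarith [mul_pos hLN h0]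
      · calc _ ≤ c0 / (2 * κ) * q := by gcongr; exact min_le_left _ _
          _ ≤ c0 / 2 * q := by gcongr; linarith
          _ = (L / N) * (c0 * Y) := by rw [mul_left_comm, hMY]; ring
          _ ≤ _ := by gcongr
      · intro i
        exact hsmallb (L / N) hLN (by nlinarith) Y (z i) (p5 i).1 (p5 i).2 hMY
    · obtain ⟨r, hr, hr1, hr2⟩ := select_r m hm hodd Y hA.le hY2
      obtain ⟨w0, w1, z, p1, p2, p3, p4, p5, p6, p7, p8, p9⟩ := prior_A m r hm hr _ rfl
      set q' := ph m (r + 1 / 2) with hq'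
      have hq'0 : 0 < q' := by
        by_contra hc; nlinarith
      set M := q / (2 * q') with hM
      have hM0 : 0 < M := by positivity
      have hMq : M * q' = q / 2 := by rw [hM]; field_simp
      have hM1 : L / N ≤ M := by
        by_contra hc; push Not at hc
        nlinarith
      have hM2 : M ≤ KK * (L / N) := by
        have : M * q' ≤ KK * (L / N) * q' := by
          rw [hMq, ← hMY]; nlinarith
        exact le_of_mul_le_mul_right this hq'0
      refine ⟨_, _, M - q / 2, CP_mk m N L q _ M q' (M - q / 2) w0 w1 z p1 p2 p3 p4 p5 p6 p7 p8 hM0.le (by linarith) hMq.le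
        (by linarith) ?_ ?_ (by linarith) (by linarith) (by linarith) ?_⟩
      · rw [sq, mul_assoc, hMq]; nlinarith [mul_pos hLN h0]
      · refine gapA c0 κ N L q M q' (al m) _ hc0 hκ hN hL h0 hM0 hal ?_ p9
        rw [sq, mul_assoc, hMq]; nlinarith
      · intro i
        exact hsmallb M hM0 hM2 q' (z i) (p5 i).1 (p5 i).2 hMq
  · obtain ⟨r, hr⟩ := hodd
    obtain ⟨w0, w1, z, p1, p2, p3, p4, p5, p6, p7, p8, p9⟩ := prior_A m r hm (by omega) (1 / 2)
      (by
        have e : (r : ℝ) + 1 / 2 = m / 2 := by rw [hr]; push_cast; ring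
        rw [e]; exact (ph_half m (by omega)).symm)
    set M := Real.sqrt (q * (L / N)) with hM
    have hM0 : 0 < M := Real.sqrt_pos.mpr (by positivity)
    have hMsq : M ^ 2 = q * (L / N) := Real.sq_sqrt (by positivity)
    have hMq : M ≤ q := by
      apply Real.sqrt_le_iff.mpr ⟨hq0, by nlinarith⟩
    have hMs : M ≤ Real.sqrt (L / N) := Real.sqrt_le_sqrt (by nlinarith)
    refine ⟨_, _, 0, CP_mk m N L q _ M (1 / 2) 0 w0 w1 z p1 p2 p3 p4 p5 p6 p7 p8 hM0.le (by norm_num) (by linarith)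
        (by nlinarith) ?_ ?_ le_rfl (by linarith) hM0.le ?_⟩
    · rw [hMsq]; nlinarith [mul_pos hLN h0]
    · refine gapA c0 κ N L q M (1 / 2) (al m) _ hc0 hκ hN hL h0 hM0 hal ?_ p9
      rw [hMsq]; nlinarith [mul_pos hLN h0]
    · intro i
      have b1 : (M * (z i - 1 / 2) - 0) ^ 2 ≤ q * (L / N) := by
        rw [← hMsq, sub_zero, mul_pow]
        have := p5 i
        have : (z i - 1 / 2) ^ 2 ≤ 1 := by nlinarith
        nlinarith [sq_nonneg M]
      calc _ ≤ N * (q * (L / N) * (1 / (0 + 3 * q / 4) + 4)) := by gcongr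
        _ = L * (4 / 3 + 4 * q) := by field_simp; ring
        _ ≤ _ := by nlinarith

lemma hasSum_mul_real {α β : Type} (f : α → ℝ) (g : β → ℝ) (a b : ℝ) (hf : HasSum f a) (hg : HasSum g b) :
    HasSum (fun x : α × β => f x.1 * g x.2) (a * b) :=
  hf.mul hg (summable_mul_of_summable_norm hf.summable.norm hg.summable.norm)

lemma hasSum_pi_prod (S : ℕ) (f : Fin S → ℕ → ℝ) (a : Fin S → ℝ) (h : ∀ k, HasSum (f k) (a k)) :
    HasSum (fun X : Fin S → ℕ => ∏ k, f k (X k)) (∏ k, a k) := by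
  induction S with
  | zero =>
    have : HasSum (fun X : Fin 0 → ℕ => ∏ k, f k (X k)) ((fun X : Fin 0 → ℕ => ∏ k, f k (X k)) default) :=
      hasSum_unique _
    simpa using this
  | succ S ih =>
    have h0 := h 0
    have hm := hasSum_mul_real (f 0) _ (a 0) _ h0 (ih (fun k : Fin S => f k.succ) (fun k : Fin S => a k.succ) (fun k : Fin S => h k.succ))
    rw [Fin.prod_univ_succ]
    rw [← (Fin.consEquiv (fun _ : Fin (S + 1) => ℕ)).hasSum_iff]
    refine (congrArg (fun F => HasSum F (a 0 * ∏ i : Fin S, a i.succ)) ?_).mp hm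
    funext x
    simp [Fin.consEquiv, Fin.prod_univ_succ]

lemma hasSum_exp_real (y : ℝ) : HasSum (fun k : ℕ => y ^ k / (Nat.factorial k)) (Real.exp y) := by
  rw [Real.exp_eq_exp_ℝ]; exact NormedSpace.expSeries_div_hasSum_exp y

lemma exp_rem (y T : ℝ) (m : ℕ) (hy : |y| ≤ T) :
    |Real.exp y - ∑ k ∈ Finset.range m, y ^ k / (Nat.factorial k)| ≤ Real.exp (3 * T - m) := by
  have h1 := hasSum_exp_real y
  have h2 : HasSum (fun k : ℕ => if k ∈ Finset.range m then y ^ k / (Nat.factorial k) else 0)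
      (∑ k ∈ Finset.range m, (if k ∈ Finset.range m then y ^ k / (Nat.factorial k : ℝ) else 0)) :=
    hasSum_sum_of_ne_finset_zero fun k hk => by simp only [hk, if_false]
  have h2' : ∑ k ∈ Finset.range m, (if k ∈ Finset.range m then y ^ k / (Nat.factorial k : ℝ) else 0) = ∑ k ∈ Finset.range m, y ^ k / (Nat.factorial k) :=
    Finset.sum_congr rfl fun k hk => by simp only [hk, if_true]
  rw [h2'] at h2
  have h3 := h1.sub h2
  have hT : 0 ≤ T := (abs_nonneg y).trans hy
  have h4 := (hasSum_exp_real (Real.exp 1 * T)).mul_left (Real.exp (-(m : ℝ)))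
  have h5 : |Real.exp y - ∑ k ∈ Finset.range m, y ^ k / (Nat.factorial k)| ≤ Real.exp (-(m : ℝ)) * Real.exp (Real.exp 1 * T) := by
    have hh : ∀ k : ℕ, |y ^ k / (Nat.factorial k : ℝ) - (if k ∈ Finset.range m then y ^ k / (Nat.factorial k : ℝ) else 0)| ≤
        Real.exp (-(m : ℝ)) * ((Real.exp 1 * T) ^ k / (Nat.factorial k)) := by
      intro k
      by_cases hk : k ∈ Finset.range m
      · simp only [hk, if_true, sub_self, abs_zero]; positivity
      · simp only [hk, if_false, sub_zero]
        have hk' : m ≤ k := by simpa using hk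
        have hkR : (m : ℝ) ≤ k := by exact_mod_cast hk'
        rw [abs_div, abs_pow, Nat.abs_cast, mul_pow, ← Real.exp_nat_mul, mul_one, ← mul_div_assoc, ← mul_assoc, ← Real.exp_add]
        gcongr
        calc |y| ^ k ≤ T ^ k := by gcongr
          _ = 1 * T ^ k := (one_mul _).symm
          _ ≤ _ := by gcongr; exact Real.one_le_exp (by linarith)
    have := tsum_of_norm_bounded (f := fun k : ℕ => y ^ k / (Nat.factorial k : ℝ) - (if k ∈ Finset.range m then y ^ k / (Nat.factorial k : ℝ) else 0)) h4 hh
    rwa [h3.tsum_eq] at this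
  refine h5.trans ?_
  rw [← Real.exp_add]
  apply Real.exp_le_exp.mpr
  have := Real.exp_one_lt_d9
  nlinarith

lemma pois_line (lam δ s : ℝ) (h : 0 < lam ∨ δ = 0) (x : ℕ) :
    poissonPMF (lam + s * δ) x = poissonPMF lam x * (Real.exp (-(s * δ)) * (1 + s * δ / lam) ^ x) := by
  unfold poissonPMF
  have : lam + s * δ = lam * (1 + s * δ / lam) := by
    rcases h with h | h
    · field_simp
    · simp [h]
  rw [neg_add, Real.exp_add]
  conv_lhs => rw [this]
  rw [mul_pow]; ring

lemma pois_two (lam δ s t : ℝ) (h : 0 < lam ∨ δ = 0) :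
    HasSum (fun x => poissonPMF lam x * (Real.exp (-(s * δ)) * (1 + s * δ / lam) ^ x) * (Real.exp (-(t * δ)) * (1 + t * δ / lam) ^ x))
      (Real.exp (s * t * (δ ^ 2 / lam))) := by
  have h1 := (hasSum_exp_real (lam * (1 + s * δ / lam) * (1 + t * δ / lam))).mul_left (Real.exp (-lam - s * δ - t * δ))
  rw [← Real.exp_add] at h1
  have e : -lam - s * δ - t * δ + lam * (1 + s * δ / lam) * (1 + t * δ / lam) = s * t * (δ ^ 2 / lam) := by
    rcases h with h | h
    · field_simp; ring
    · simp [h]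
  rw [e] at h1
  refine (congrArg (fun F => HasSum F (Real.exp (s * t * (δ ^ 2 / lam)))) ?_).mp h1
  funext x
  unfold poissonPMF
  rw [show -lam - s * δ - t * δ = -lam + (-(s * δ)) + (-(t * δ)) by ring, Real.exp_add, Real.exp_add, mul_pow, mul_pow]
  ring

lemma chi_line {κ : Type} [Fintype κ] {S : ℕ} (lam δ : Fin S → ℝ) (hl : ∀ k, 0 ≤ lam k) (h : ∀ k, 0 < lam k ∨ δ k = 0)
    (v s : κ → ℝ) (m : ℕ) (T : ℝ) (hv : ∑ i, |v i| ≤ 2) (hmom : ∀ k, k < m → ∑ i, v i * s i ^ k = 0)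
    (hT : ∀ i, s i ^ 2 * ∑ k, δ k ^ 2 / lam k ≤ T) :
    ∑' X : Fin S → ℕ, ENNReal.ofReal |∑ i, v i * ∏ k, poissonPMF (lam k + s i * δ k) (X k)| ≤
      ENNReal.ofReal (2 * Real.exp ((3 * T - m) / 2)) := by
  set Γ := ∑ k, δ k ^ 2 / lam k with hΓ
  have hΓ0 : 0 ≤ Γ := Finset.sum_nonneg fun k _ => div_nonneg (sq_nonneg _) (hl k)
  set ref : (Fin S → ℕ) → ℝ := fun X => ∏ k, poissonPMF (lam k) (X k) with href
  set R : ℝ → (Fin S → ℕ) → ℝ := fun t X => ∏ k, (Real.exp (-(t * δ k)) * (1 + t * δ k / lam k) ^ (X k)) with hR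
  have href0 : ∀ X, 0 ≤ ref X := fun X => Finset.prod_nonneg fun k _ => by
    unfold poissonPMF; have := hl k; positivity
  have hf : ∀ t X, ∏ k, poissonPMF (lam k + t * δ k) (X k) = ref X * R t X := by
    intro t X
    rw [href, hR, ← Finset.prod_mul_distrib]
    exact Finset.prod_congr rfl fun k _ => pois_line _ _ _ (h k) _
  have hRR : ∀ t t', HasSum (fun X => ref X * R t X * R t' X) (Real.exp (t * t' * Γ)) := by
    intro t t'
    have := hasSum_pi_prod S _ _ (fun k => pois_two (lam k) (δ k) t t' (h k))
    rw [← Real.exp_sum, ← Finset.mul_sum] at this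
    convert this using 1
    funext X
    rw [href, hR, ← Finset.prod_mul_distrib, ← Finset.prod_mul_distrib]
  have h1 : HasSum ref 1 := by
    have := hRR 0 0
    simpa [hR] using this
  set D := ∑ i, ∑ j, v i * v j * Real.exp (s i * s j * Γ) with hD
  have h2 : HasSum (fun X => ref X * (∑ i, v i * R (s i) X) ^ 2) D := by
    have : HasSum (fun X => ∑ i, ∑ j, v i * v j * (ref X * R (s i) X * R (s j) X)) D :=
      hasSum_sum fun i _ => hasSum_sum fun j _ => (hRR (s i) (s j)).mul_left _
    convert this using 1
    funext X
    rw [sq, Finset.sum_mul_sum, Finset.mul_sum]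
    refine Finset.sum_congr rfl fun i _ => ?_
    rw [Finset.mul_sum]
    exact Finset.sum_congr rfl fun j _ => by ring
  set η := 2 * Real.exp ((3 * T - m) / 2) with hη
  have hη0 : 0 < η := by positivity
  have hη2 : η ^ 2 = 4 * Real.exp (3 * T - m) := by
    rw [hη, mul_pow, ← Real.exp_nat_mul]; norm_num; ring
  have hDle : D ≤ η ^ 2 := by
    have hz : ∑ i, ∑ j, v i * v j * ∑ k ∈ Finset.range m, (s i * s j * Γ) ^ k / (Nat.factorial k) = 0 := by
      have : ∑ i, ∑ j, v i * v j * ∑ k ∈ Finset.range m, (s i * s j * Γ) ^ k / (Nat.factorial k)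
          = ∑ k ∈ Finset.range m, Γ ^ k / (Nat.factorial k) * ((∑ i, v i * s i ^ k) * (∑ j, v j * s j ^ k)) := by
        conv_lhs => simp only [Finset.mul_sum]
        have : ∀ i : κ, ∑ j, ∑ k ∈ Finset.range m, v i * v j * ((s i * s j * Γ) ^ k / (Nat.factorial k)) =
           ∑ k ∈ Finset.range m, ∑ j, v i * v j * ((s i * s j * Γ) ^ k / (Nat.factorial k)) := fun i => Finset.sum_comm
        simp only [this]
        rw [Finset.sum_comm]
        refine Finset.sum_congr rfl fun k _ => ?_
        rw [Finset.sum_mul_sum, Finset.mul_sum]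
        refine Finset.sum_congr rfl fun i _ => ?_
        rw [Finset.mul_sum]
        refine Finset.sum_congr rfl fun j _ => ?_
        rw [mul_pow, mul_pow]; ring
      rw [this]
      refine Finset.sum_eq_zero fun k hk => ?_
      rw [hmom k (Finset.mem_range.mp hk)]; ring
    have hD2 : D = ∑ i, ∑ j, v i * v j * (Real.exp (s i * s j * Γ) - ∑ k ∈ Finset.range m, (s i * s j * Γ) ^ k / (Nat.factorial k)) := by
      simp only [mul_sub, Finset.sum_sub_distrib]
      rw [hz, sub_zero]
    rw [hD2, hη2]
    have hb : ∀ i j, |s i * s j * Γ| ≤ T := by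
      intro i j
      rw [abs_mul, abs_of_nonneg hΓ0, abs_mul]
      have h1 := hT i
      have h2 := hT j
      have h3 : |s i| * |s j| ≤ (s i ^ 2 + s j ^ 2) / 2 := by
        have := sq_nonneg (|s i| - |s j|)
        have e1 := sq_abs (s i)
        have e2 := sq_abs (s j)
        nlinarith
      calc |s i| * |s j| * Γ ≤ (s i ^ 2 + s j ^ 2) / 2 * Γ := by gcongr
        _ ≤ T := by linarith
    calc _ ≤ ∑ i, ∑ j, |v i| * |v j| * Real.exp (3 * T - m) := by
          refine Finset.sum_le_sum fun i _ => Finset.sum_le_sum fun j _ => ?_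
          refine (le_abs_self _).trans ?_
          rw [abs_mul, abs_mul]
          gcongr
          exact exp_rem _ _ _ (hb i j)
      _ = (∑ i, |v i|) * (∑ j, |v j|) * Real.exp (3 * T - m) := by
          rw [Finset.sum_mul_sum, Finset.sum_mul]
          exact Finset.sum_congr rfl fun i _ => by rw [Finset.sum_mul]
      _ ≤ 2 * 2 * Real.exp (3 * T - m) := by
          have : 0 ≤ ∑ i, |v i| := Finset.sum_nonneg fun i _ => abs_nonneg _
          gcongr
      _ = _ := by ring
  have h3 := (h1.mul_left (η / 2)).add (h2.mul_left (1 / (2 * η)))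
  have h4 : ∀ X, |∑ i, v i * ∏ k, poissonPMF (lam k + s i * δ k) (X k)| ≤ η / 2 * ref X + 1 / (2 * η) * (ref X * (∑ i, v i * R (s i) X) ^ 2) := by
    intro X
    have e : ∑ i, v i * ∏ k, poissonPMF (lam k + s i * δ k) (X k) = ref X * ∑ i, v i * R (s i) X := by
      rw [Finset.mul_sum]; exact Finset.sum_congr rfl fun i _ => by rw [hf]; ring
    rw [e, abs_mul, abs_of_nonneg (href0 X)]
    set z := ∑ i, v i * R (s i) X
    have h5 : |z| ≤ η / 2 + 1 / (2 * η) * z ^ 2 := by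
      have h6 : η / 2 + 1 / (2 * η) * z ^ 2 - |z| = (η - |z|) ^ 2 / (2 * η) := by
        rw [← sq_abs z]; field_simp; ring
      have : 0 ≤ (η - |z|) ^ 2 / (2 * η) := by positivity
      linarith
    calc _ ≤ ref X * (η / 2 + 1 / (2 * η) * z ^ 2) := mul_le_mul_of_nonneg_left h5 (href0 X)
      _ = _ := by ring
  have h5 : ∀ X, 0 ≤ η / 2 * ref X + 1 / (2 * η) * (ref X * (∑ i, v i * R (s i) X) ^ 2) := fun X => (abs_nonneg _).trans (h4 X)
  calc _ ≤ ∑' X, ENNReal.ofReal (η / 2 * ref X + 1 / (2 * η) * (ref X * (∑ i, v i * R (s i) X) ^ 2)) :=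
        ENNReal.tsum_le_tsum fun X => ENNReal.ofReal_le_ofReal (h4 X)
    _ = ENNReal.ofReal (η / 2 * 1 + 1 / (2 * η) * D) := by
        rw [← ENNReal.ofReal_tsum_of_nonneg h5 h3.summable, h3.tsum_eq]
    _ ≤ _ := by
        apply ENNReal.ofReal_le_ofReal
        have : 1 / (2 * η) * D ≤ 1 / (2 * η) * η ^ 2 := by gcongr
        have e : 1 / (2 * η) * η ^ 2 = η / 2 := by field_simp
        linarith

lemma tsum_prodPMF {S : ℕ} (n : ℕ) (p : Fin S → ℝ) (hp : ∀ k, 0 ≤ p k) :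
    (∀ X, 0 ≤ prodPMF n p X) ∧ ∑' X, ENNReal.ofReal (prodPMF n p X) = 1 := by
  have h0 : ∀ X, 0 ≤ prodPMF n p X := fun X => Finset.prod_nonneg fun k _ => by
    unfold poissonPMF; have := hp k; positivity
  refine ⟨h0, ?_⟩
  have h1 : ∀ k, HasSum (fun x => poissonPMF (n * p k) x) 1 := by
    intro k
    have := (hasSum_exp_real (n * p k)).mul_left (Real.exp (-(n * p k)))
    rw [← Real.exp_add, neg_add_cancel, Real.exp_zero] at this
    refine (congrArg (fun F => HasSum F (1 : ℝ)) ?_).mp this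
    funext x; unfold poissonPMF; ring
  have h2 := hasSum_pi_prod S _ _ h1
  rw [Finset.prod_const_one] at h2
  rw [← ENNReal.ofReal_tsum_of_nonneg h0 h2.summable]
  have : ∑' X, prodPMF n p X = 1 := h2.tsum_eq
  rw [this, ENNReal.ofReal_one]

/-- product weight -/
noncomputable def pw {S : ℕ} {ι : Type} (W : Fin S → ι → ℝ) (x : Fin S → ι) : ℝ := ∏ k, W k (x k)

lemma pw_nonneg {S : ℕ} {ι : Type} (W : Fin S → ι → ℝ) (h : ∀ k i, 0 ≤ W k i) (x : Fin S → ι) : 0 ≤ pw W x :=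
  Finset.prod_nonneg fun k _ => h k _

lemma pw_prod {S : ℕ} {ι : Type} [Fintype ι] [DecidableEq ι] (W g : Fin S → ι → ℝ) :
    ∑ x, pw W x * ∏ k, g k (x k) = ∏ k, ∑ i, W k i * g k i := by
  rw [Finset.prod_univ_sum, Fintype.piFinset_univ]
  exact Finset.sum_congr rfl fun x _ => by rw [pw, Finset.prod_mul_distrib]

lemma pw_sum {S : ℕ} {ι : Type} [Fintype ι] [DecidableEq ι] (W : Fin S → ι → ℝ) (h : ∀ k, ∑ i, W k i = 1) :
    ∑ x, pw W x = 1 := by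
  have := pw_prod W (fun _ _ => 1)
  simpa [h] using this

lemma pw_update {S : ℕ} {ι : Type} [Fintype ι] [DecidableEq ι] (W : Fin S → ι → ℝ) (j : Fin S) (h : ∑ i, W j i = 1)
    (v : ι → ℝ) (F : (Fin S → ι) → ℝ) :
    ∑ x, pw (Function.update W j v) x * F x = ∑ x, pw W x * ∑ i, v i * F (Function.update x j i) := by
  have e1 : ∑ x, pw W x * ∑ i, v i * F (Function.update x j i) =
      ∑ y : (Fin S → ι) × ι, pw W y.1 * (v y.2 * F (Function.update y.1 j y.2)) := by
    rw [Fintype.sum_prod_type]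
    exact Finset.sum_congr rfl fun x _ => by rw [Finset.mul_sum]
  have e2 : ∑ x, pw (Function.update W j v) x * F x =
      ∑ y : (Fin S → ι) × ι, pw (Function.update W j v) y.1 * (W j y.2 * F y.1) := by
    rw [Fintype.sum_prod_type]
    refine Finset.sum_congr rfl fun x _ => ?_
    simp only
    rw [← Finset.mul_sum, ← Finset.sum_mul, h, one_mul]
  rw [e1, e2]
  have hinv : Function.Involutive (fun y : (Fin S → ι) × ι => (Function.update y.1 j y.2, y.1 j)) := by
    rintro ⟨x, i⟩
    simp
  rw [← Equiv.sum_comp hinv.toPerm]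
  refine Finset.sum_congr rfl fun y _ => ?_
  obtain ⟨x, i⟩ := y
  simp only [Function.Involutive.coe_toPerm]
  have hp : pw (Function.update W j v) (Function.update x j i) * W j (x j) = pw W x * v i := by
    unfold pw
    rw [← Finset.mul_prod_erase _ _ (Finset.mem_univ j), ← Finset.mul_prod_erase _ (fun k => W k (x k)) (Finset.mem_univ j)]
    have : ∏ k ∈ Finset.univ.erase j, Function.update W j v k (Function.update x j i k) = ∏ k ∈ Finset.univ.erase j, W k (x k) :=
      Finset.prod_congr rfl fun k hk => by
        have := Finset.ne_of_mem_erase hk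
        simp [this]
    rw [this]; simp; ring
  calc _ = (pw (Function.update W j v) (Function.update x j i) * W j (x j)) * F (Function.update x j i) := by ring
    _ = _ := by rw [hp]; ring

lemma pw_self {S : ℕ} {ι : Type} [Fintype ι] [DecidableEq ι] (W : Fin S → ι → ℝ) (j : Fin S) (h : ∑ i, W j i = 1)
    (F : (Fin S → ι) → ℝ) :
    ∑ x, pw W x * F x = ∑ x, pw W x * ∑ i, W j i * F (Function.update x j i) := by
  have := pw_update W j h (W j) F
  rwa [Function.update_eq_self] at this

lemma pw_var {S : ℕ} {ι : Type} [Fintype ι] [DecidableEq ι] (W g : Fin S → ι → ℝ) (h : ∀ k, ∑ i, W k i = 1)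
    (hg : ∀ k, ∑ i, W k i * g k i = 0) :
    ∑ x, pw W x * (∑ k, g k (x k)) ^ 2 = ∑ k, ∑ i, W k i * g k i ^ 2 := by
  have hs := pw_sum W h
  have e : ∑ x, pw W x * (∑ k, g k (x k)) ^ 2 = ∑ j, ∑ k, ∑ x, pw W x * (g j (x j) * g k (x k)) := by
    have : ∀ j, ∑ k, ∑ x, pw W x * (g j (x j) * g k (x k)) = ∑ x, ∑ k, pw W x * (g j (x j) * g k (x k)) := fun j => Finset.sum_comm
    simp only [this]
    rw [Finset.sum_comm]
    refine Finset.sum_congr rfl fun x _ => ?_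
    rw [sq, Finset.sum_mul_sum, Finset.mul_sum]
    exact Finset.sum_congr rfl fun j _ => by rw [Finset.mul_sum]
  rw [e]
  refine Finset.sum_congr rfl fun j _ => ?_
  rw [Finset.sum_eq_single j]
  · rw [pw_self W j (h j)]
    simp only [Function.update_self]
    rw [← Finset.sum_mul, hs, one_mul]
    exact Finset.sum_congr rfl fun i _ => by ring
  · intro k _ hk
    rw [pw_self W j (h j)]
    refine Finset.sum_eq_zero fun x _ => ?_
    simp only [Function.update_self, Function.update_of_ne hk]
    have : ∑ i, W j i * (g j i * g k (x k)) = (∑ i, W j i * g j i) * g k (x k) := by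
      rw [Finset.sum_mul]; exact Finset.sum_congr rfl fun i _ => by ring
    rw [this, hg j]; ring
  · simp

lemma exp_quad (y : ℝ) (hy : |y| ≤ 1) : Real.exp y ≤ 1 + y + y ^ 2 := by
  have := Real.abs_exp_sub_one_sub_id_le hy
  have := (abs_le.mp this).2
  linarith

lemma pw_mgf {S : ℕ} {ι : Type} [Fintype ι] [DecidableEq ι] (W g : Fin S → ι → ℝ) (h0 : ∀ k i, 0 ≤ W k i) (h : ∀ k, ∑ i, W k i = 1)
    (hg : ∀ k, ∑ i, W k i * g k i = 0) (θ Vr : ℝ) (hθ : ∀ k i, |θ * g k i| ≤ 1) (hV : ∑ k, ∑ i, W k i * g k i ^ 2 ≤ Vr) :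
    ∑ x, pw W x * Real.exp (θ * ∑ k, g k (x k)) ≤ Real.exp (θ ^ 2 * Vr) := by
  have e : ∀ x : Fin S → ι, Real.exp (θ * ∑ k, g k (x k)) = ∏ k, Real.exp (θ * g k (x k)) := fun x => by
    rw [Finset.mul_sum, Real.exp_sum]
  simp only [e]
  rw [pw_prod W (fun k i => Real.exp (θ * g k i))]
  calc _ ≤ ∏ k, Real.exp (θ ^ 2 * ∑ i, W k i * g k i ^ 2) := by
        refine Finset.prod_le_prod (fun k _ => Finset.sum_nonneg fun i _ => mul_nonneg (h0 k i) (Real.exp_pos _).le) fun k _ => ?_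
        calc _ ≤ ∑ i, W k i * (1 + θ * g k i + (θ * g k i) ^ 2) :=
              Finset.sum_le_sum fun i _ => mul_le_mul_of_nonneg_left (exp_quad _ (hθ k i)) (h0 k i)
          _ = ∑ i, W k i + θ * ∑ i, W k i * g k i + θ ^ 2 * ∑ i, W k i * g k i ^ 2 := by
              simp only [Finset.mul_sum]
              rw [← Finset.sum_add_distrib, ← Finset.sum_add_distrib]
              exact Finset.sum_congr rfl fun i _ => by ring
          _ = θ ^ 2 * (∑ i, W k i * g k i ^ 2) + 1 := by rw [h k, hg k]; ring
          _ ≤ _ := Real.add_one_le_exp _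
    _ = Real.exp (θ ^ 2 * ∑ k, ∑ i, W k i * g k i ^ 2) := by rw [← Real.exp_sum, Finset.mul_sum]
    _ ≤ _ := by gcongr

lemma pw_bad {S : ℕ} {ι : Type} [Fintype ι] [DecidableEq ι] (W g : Fin S → ι → ℝ) (h0 : ∀ k i, 0 ≤ W k i) (h : ∀ k, ∑ i, W k i = 1)
    (hg : ∀ k, ∑ i, W k i * g k i = 0) (θ Vr : ℝ) (hθ0 : 0 < θ) (hθ : ∀ k i, |θ * g k i| ≤ 1) (hV : ∑ k, ∑ i, W k i * g k i ^ 2 ≤ Vr) :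
    ∑ x, pw W x * (if |∑ k, g k (x k)| ≤ 1 / 8 then 0 else 1) ≤ 2 * Real.exp (θ ^ 2 * Vr - θ / 8) := by
  have m1 := pw_mgf W g h0 h hg θ Vr hθ hV
  have m2 := pw_mgf W g h0 h hg (-θ) Vr (fun k i => by rw [neg_mul, abs_neg]; exact hθ k i) hV
  rw [neg_sq] at m2
  calc _ ≤ ∑ x, (Real.exp (-(θ / 8)) * (pw W x * Real.exp (θ * ∑ k, g k (x k))) + Real.exp (-(θ / 8)) * (pw W x * Real.exp (-θ * ∑ k, g k (x k)))) := by
        refine Finset.sum_le_sum fun x _ => ?_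
        set U := ∑ k, g k (x k)
        have hp := pw_nonneg W h0 x
        have : (if |U| ≤ 1 / 8 then (0 : ℝ) else 1) ≤ Real.exp (-(θ / 8)) * Real.exp (θ * U) + Real.exp (-(θ / 8)) * Real.exp (-θ * U) := by
          split_ifs with hU
          · positivity
          · rw [← Real.exp_add, ← Real.exp_add]
            push Not at hU
            rcases lt_abs.mp hU with h1 | h1
            · have : 1 ≤ Real.exp (-(θ / 8) + θ * U) := Real.one_le_exp (by nlinarith)
              have := Real.exp_pos (-(θ / 8) + -θ * U)
              linarith
            · have : 1 ≤ Real.exp (-(θ / 8) + -θ * U) := Real.one_le_exp (by nlinarith)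
              have := Real.exp_pos (-(θ / 8) + θ * U)
              linarith
        calc _ ≤ pw W x * _ := mul_le_mul_of_nonneg_left this hp
          _ = _ := by ring
    _ ≤ Real.exp (-(θ / 8)) * Real.exp (θ ^ 2 * Vr) + Real.exp (-(θ / 8)) * Real.exp (θ ^ 2 * Vr) := by
        rw [Finset.sum_add_distrib, ← Finset.mul_sum, ← Finset.mul_sum]
        gcongr
    _ = _ := by rw [sub_eq_add_neg, Real.exp_add]; ring

/-- normalized perturbed vector -/
noncomputable def pvec {S : ℕ} (q y : Fin S → ℝ) : Fin S → ℝ :=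
  open Classical in if |∑ k, y k| ≤ 1 / 4 then fun k => q k * (1 - ∑ k, y k) + y k else q

lemma pvec_dist {S : ℕ} (q y : Fin S → ℝ) (hq : IsDist q) (hy : ∀ k, -(q k / 2) ≤ y k) : IsDist (pvec q y) := by
  unfold pvec
  split_ifs with h
  · constructor
    · intro k
      have h1 := hq.1 k
      have h2 := hy k
      have h3 := (abs_le.mp h).2
      nlinarith
    · rw [Finset.sum_add_distrib, ← Finset.sum_mul, hq.2]; ring
  · exact hq

lemma step_good {S : ℕ} (m n : ℕ) (L c1 : ℝ) (hn : 1 ≤ n) (q y : Fin S → ℝ) (hq : IsDist q) (hy : ∀ k, -(q k / 2) ≤ y k)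
    (hU : |∑ k, y k| ≤ 1 / 8) (j : Fin S) (w : Bool → Idx m → ℝ) (u : Idx m → ℝ) (a : ℝ) (hcp : CP m n L (q j) c1 w u a)
    (hW : KK * Real.sqrt (L / n) ≤ 1 / 16) (hyj : |y j| ≤ KK * Real.sqrt (L / n)) :
    ∑' X, ENNReal.ofReal |∑ i, (w true i - w false i) * prodPMF n (pvec q (Function.update y j (u i))) X| ≤
      ENNReal.ofReal (2 * Real.exp ((3 * (2 * KK * L) - m) / 2)) := by
  have hn0 : (0 : ℝ) < n := by exact_mod_cast hn
  set Ur := ∑ k, y k - y j + a with hUr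
  have hsum : ∀ t, ∑ k, Function.update y j t k = Ur + (t - a) := by
    intro t
    rw [← Finset.add_sum_erase _ _ (Finset.mem_univ j)]
    have : ∑ k ∈ Finset.univ.erase j, Function.update y j t k = ∑ k ∈ Finset.univ.erase j, y k :=
      Finset.sum_congr rfl fun k hk => by
        have := Finset.ne_of_mem_erase hk
        simp [this]
    have h2 := Finset.add_sum_erase Finset.univ y (Finset.mem_univ j)
    rw [this, Function.update_self, hUr]; linarith
  have hUb := abs_le.mp hU
  have hyb := abs_le.mp hyj
  have hab := abs_le.mp hcp.a_le
  have hUr1 : |Ur| ≤ 1 / 4 := by rw [abs_le]; constructor <;> linarith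
  have hUrb := abs_le.mp hUr1
  set pr : Fin S → ℝ := fun k => q k * (1 - Ur) + (if k = j then a else y k) with hpr
  set d : Fin S → ℝ := fun k => (if k = j then 1 else 0) - q k with hd
  have hpv : ∀ i k, pvec q (Function.update y j (u i)) k = pr k + (u i - a) * d k := by
    intro i k
    have hb := abs_le.mp (hcp.ub i)
    have : |∑ k, Function.update y j (u i) k| ≤ 1 / 4 := by
      rw [hsum, abs_le]; constructor <;> linarith
    unfold pvec
    rw [if_pos this, hsum]
    simp only [hpr, hd]
    by_cases hk : k = j
    · subst hk; simp; ring
    · simp [hk]; ring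
  have hprj : a + 3 * q j / 4 ≤ pr j := by
    simp only [hpr, if_true]; have := hq.1 j; nlinarith
  have hprj0 : 0 < pr j := lt_of_lt_of_le hcp.a_pos hprj
  have hprk : ∀ k, k ≠ j → q k / 4 ≤ pr k := by
    intro k hk
    simp only [hpr, if_neg hk]; have := hq.1 k; have := hy k; nlinarith
  have hpr0 : ∀ k, 0 ≤ pr k := by
    intro k
    by_cases hk : k = j
    · rw [hk]; exact hprj0.le
    · have := hprk k hk; have := hq.1 k; linarith
  have hqle : ∀ k, q k ≤ 1 := fun k => by
    rw [← hq.2]; exact Finset.single_le_sum (fun i _ => hq.1 i) (Finset.mem_univ k)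
  have hΓ : ∑ k, (n * d k) ^ 2 / (n * pr k) ≤ n * (1 / (a + 3 * q j / 4) + 4) := by
    have e : ∀ k, (n * d k) ^ 2 / (n * pr k) = n * (d k ^ 2 / pr k) := fun k => by
      rw [mul_pow, sq, mul_assoc, mul_div_mul_left _ _ hn0.ne', mul_div_assoc]
    simp only [e]
    rw [← Finset.mul_sum]
    refine mul_le_mul_of_nonneg_left ?_ hn0.le
    rw [← Finset.add_sum_erase _ _ (Finset.mem_univ j)]
    refine add_le_add ?_ ?_
    · have := hcp.a_pos
      have h1 := hq.1 j
      have h2 := hqle j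
      simp only [hd, if_true]
      exact div_le_div₀ (by norm_num) (by nlinarith) this hprj
    · calc _ ≤ ∑ k ∈ Finset.univ.erase j, 4 * q k := by
            refine Finset.sum_le_sum fun k hk => ?_
            have hk' := Finset.ne_of_mem_erase hk
            have h1 := hprk k hk'
            simp only [hd, if_neg hk', zero_sub, neg_sq]
            rcases (hq.1 k).eq_or_lt with h2 | h2
            · rw [← h2]; simp
            · rw [div_le_iff₀ (by linarith)]; nlinarith
        _ ≤ ∑ k, 4 * q k := Finset.sum_le_sum_of_subset_of_nonneg (Finset.erase_subset _ _) fun k _ _ => by have := hq.1 k; linarith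
        _ = 4 := by rw [← Finset.mul_sum, hq.2]; norm_num
  have key := chi_line (κ := Idx m) (fun k => n * pr k) (fun k => n * d k) (fun k => mul_nonneg hn0.le (hpr0 k))
    (fun k => by
      by_cases hk : k = j
      · left; rw [hk]; positivity
      · rcases (hq.1 k).eq_or_lt with h2 | h2
        · right; simp [hd, hk, ← h2]
        · left; have := hprk k hk; exact mul_pos hn0 (by linarith))
    (fun i => w true i - w false i) (fun i => u i - a) m (2 * KK * L)
    (by
      calc _ ≤ ∑ i, (w true i + w false i) := Finset.sum_le_sum fun i _ => by
            have h1 := hcp.nonneg true i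
            have h2 := hcp.nonneg false i
            rw [abs_le]; constructor <;> linarith
        _ = 2 := by rw [Finset.sum_add_distrib, hcp.sum_one, hcp.sum_one]; norm_num)
    (fun k hk => by
      simp only [sub_mul, Finset.sum_sub_distrib]
      rw [hcp.mom k hk, sub_self])
    (fun i => by
      calc _ ≤ (u i - a) ^ 2 * (n * (1 / (a + 3 * q j / 4) + 4)) := by gcongr
        _ = n * ((u i - a) ^ 2 * (1 / (a + 3 * q j / 4) + 4)) := by ring
        _ ≤ _ := hcp.bound i)
  refine le_trans (le_of_eq ?_) key
  refine tsum_congr fun X => ?_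
  congr 2
  refine Finset.sum_congr rfl fun i _ => ?_
  congr 1
  unfold prodPMF
  refine Finset.prod_congr rfl fun k _ => ?_
  rw [hpv]; congr 1; ring

lemma l1_lin {κ τ : Type} [Fintype κ] (c : κ → ℝ) (hc : ∀ x, 0 ≤ c x) (F : κ → τ → ℝ) :
    ∑' X, ENNReal.ofReal |∑ x, c x * F x X| ≤ ∑ x, ENNReal.ofReal (c x) * ∑' X, ENNReal.ofReal |F x X| := by
  calc _ ≤ ∑' X, ∑ x, ENNReal.ofReal (c x) * ENNReal.ofReal |F x X| := by
        refine ENNReal.tsum_le_tsum fun X => ?_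
        calc _ ≤ ENNReal.ofReal (∑ x, c x * |F x X|) := by
              refine ENNReal.ofReal_le_ofReal ((Finset.abs_sum_le_sum_abs _ _).trans ?_)
              exact Finset.sum_le_sum fun x _ => by rw [abs_mul, abs_of_nonneg (hc x)]
          _ = _ := by
              rw [ENNReal.ofReal_sum_of_nonneg fun x _ => mul_nonneg (hc x) (abs_nonneg _)]
              exact Finset.sum_congr rfl fun x _ => ENNReal.ofReal_mul (hc x)
    _ = ∑ x, ∑' X, ENNReal.ofReal (c x) * ENNReal.ofReal |F x X| :=
        Summable.tsum_finsetSum fun x _ => ENNReal.summable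
    _ = _ := Finset.sum_congr rfl fun x _ => ENNReal.tsum_mul_left

/-- the two-valued weights -/
noncomputable def WW {S m : ℕ} (w : Fin S → Bool → Idx m → ℝ) (s : Finset (Fin S)) : Fin S → Idx m → ℝ :=
  fun k => if k ∈ s then w k true else w k false

/-- the mixture -/
noncomputable def mixt {S m : ℕ} (n : ℕ) (q : Fin S → ℝ) (u : Fin S → Idx m → ℝ) (W : Fin S → Idx m → ℝ) (X : Fin S → ℕ) : ℝ :=
  ∑ x, pw W x * prodPMF n (pvec q (fun k => u k (x k))) X

lemma hybrid_step {S : ℕ} (m n : ℕ) (L c1 : ℝ) (hn : 1 ≤ n) (hL : 0 < L) (q : Fin S → ℝ) (hq : IsDist q)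
    (w : Fin S → Bool → Idx m → ℝ) (u : Fin S → Idx m → ℝ) (a : Fin S → ℝ)
    (hcp : ∀ k, CP m n L (q k) c1 (w k) (u k) (a k)) (hW : KK * Real.sqrt (L / n) ≤ 1 / 16)
    (s : Finset (Fin S)) (j : Fin S) (hj : j ∉ s) :
    ∑' X, ENNReal.ofReal |mixt n q u (WW w (insert j s)) X - mixt n q u (WW w s) X| ≤
      ENNReal.ofReal (2 * Real.exp ((3 * (2 * KK * L) - m) / 2) + 4 * Real.exp (1 - 1 / (8 * (KK * Real.sqrt (L / n))))) := by
  have hn0 : (0 : ℝ) < n := by exact_mod_cast hn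
  have hKK := KK_ge
  set η := 2 * Real.exp ((3 * (2 * KK * L) - m) / 2) with hη
  have hη0 : 0 ≤ η := by positivity
  have hbool : ∀ k, ∃ b, WW w s k = w k b := fun k => by
    unfold WW; split_ifs
    · exact ⟨true, rfl⟩
    · exact ⟨false, rfl⟩
  have hW0 : ∀ k i, 0 ≤ WW w s k i := fun k i => by
    obtain ⟨b, hb⟩ := hbool k; rw [hb]; exact (hcp k).nonneg b i
  have hW1 : ∀ k, ∑ i, WW w s k i = 1 := fun k => by
    obtain ⟨b, hb⟩ := hbool k; rw [hb]; exact (hcp k).sum_one b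
  have hWm : ∀ k, ∑ i, WW w s k i * u k i = 0 := fun k => by
    obtain ⟨b, hb⟩ := hbool k; rw [hb]; exact (hcp k).mean b
  have hWv : ∑ k, ∑ i, WW w s k i * u k i ^ 2 ≤ KK * (L / n) := by
    calc _ ≤ ∑ k, q k * (KK * (L / n)) := Finset.sum_le_sum fun k _ => by
          obtain ⟨b, hb⟩ := hbool k; rw [hb]
          have := (hcp k).var b
          linarith
      _ = _ := by rw [← Finset.sum_mul, hq.2, one_mul]
  have hlow : ∀ x : Fin S → Idx m, ∀ k, -(q k / 2) ≤ u k (x k) := fun x k => (hcp k).lower _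
  have hv2 : ∑ i, |w j true i - w j false i| ≤ 2 := by
    calc _ ≤ ∑ i, (w j true i + w j false i) := Finset.sum_le_sum fun i _ => by
            have h1 := (hcp j).nonneg true i
            have h2 := (hcp j).nonneg false i
            rw [abs_le]; constructor <;> linarith
        _ = 2 := by rw [Finset.sum_add_distrib, (hcp j).sum_one, (hcp j).sum_one]; norm_num
  have hins : WW w (insert j s) = Function.update (WW w s) j (w j true) := by
    funext k
    by_cases hk : k = j
    · subst hk; simp [WW]
    · simp [WW, hk]
  have hself : WW w s j = w j false := by simp [WW, hj]
  have hdiff : ∀ X, mixt n q u (WW w (insert j s)) X - mixt n q u (WW w s) X =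
      ∑ x, pw (WW w s) x * ∑ i, (w j true i - w j false i) * prodPMF n (pvec q (Function.update (fun k => u k (x k)) j (u j i))) X := by
    intro X
    have hup : ∀ (x : Fin S → Idx m) i, (fun k => u k (Function.update x j i k)) = Function.update (fun k => u k (x k)) j (u j i) := by
      intro x i; funext k
      by_cases hk : k = j
      · subst hk; simp
      · simp [hk]
    unfold mixt
    rw [hins, pw_update _ j (hW1 j), pw_self (WW w s) j (hW1 j) (fun x => prodPMF n (pvec q (fun k => u k (x k))) X), hself, ← Finset.sum_sub_distrib]
    refine Finset.sum_congr rfl fun x _ => ?_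
    rw [← mul_sub, ← Finset.sum_sub_distrib]
    congr 1
    exact Finset.sum_congr rfl fun i _ => by rw [hup]; ring
  simp only [hdiff]
  refine (l1_lin (pw (WW w s)) (pw_nonneg _ hW0) (fun x X => ∑ i, (w j true i - w j false i) * prodPMF n (pvec q (Function.update (fun k => u k (x k)) j (u j i))) X)).trans ?_
  have hpt : ∀ x : Fin S → Idx m, ∑' X, ENNReal.ofReal |∑ i, (w j true i - w j false i) * prodPMF n (pvec q (Function.update (fun k => u k (x k)) j (u j i))) X| ≤
      ENNReal.ofReal (η + 2 * (if |∑ k, u k (x k)| ≤ 1 / 8 then 0 else 1)) := by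
    intro x
    split_ifs with hU
    · rw [mul_zero, add_zero]
      exact step_good m n L c1 hn q (fun k => u k (x k)) hq (hlow x) hU j (w j) (u j) (a j) (hcp j) hW ((hcp j).ub _)
    · have hd : ∀ i, IsDist (pvec q (Function.update (fun k => u k (x k)) j (u j i))) := fun i => by
        refine pvec_dist q _ hq fun k => ?_
        by_cases hk : k = j
        · subst hk; simp only [Function.update_self]; exact (hcp k).lower i
        · simp only [Function.update_of_ne hk]; exact hlow x k
      have h3 : ∀ X, |∑ i, (w j true i - w j false i) * prodPMF n (pvec q (Function.update (fun k => u k (x k)) j (u j i))) X| ≤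
          |∑ i, |w j true i - w j false i| * prodPMF n (pvec q (Function.update (fun k => u k (x k)) j (u j i))) X| := by
        intro X
        refine (Finset.abs_sum_le_sum_abs _ _).trans (le_trans (le_of_eq ?_) (le_abs_self _))
        refine Finset.sum_congr rfl fun i _ => ?_
        rw [abs_mul, abs_of_nonneg ((tsum_prodPMF n _ (hd i).1).1 X)]
      refine (ENNReal.tsum_le_tsum fun X => ENNReal.ofReal_le_ofReal (h3 X)).trans ?_
      refine (l1_lin _ (fun i => abs_nonneg _) (fun i X => prodPMF n (pvec q (Function.update (fun k => u k (x k)) j (u j i))) X)).trans ?_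
      have h4 : ∀ i, ∑' X, ENNReal.ofReal |prodPMF n (pvec q (Function.update (fun k => u k (x k)) j (u j i))) X| = 1 := fun i => by
        have := tsum_prodPMF n _ (hd i).1
        rw [← this.2]
        exact tsum_congr fun X => by rw [abs_of_nonneg (this.1 X)]
      simp only [h4, mul_one]
      rw [← ENNReal.ofReal_sum_of_nonneg fun i _ => abs_nonneg _]
      exact ENNReal.ofReal_le_ofReal (by linarith)
  refine (Finset.sum_le_sum fun x _ => mul_le_mul_right (hpt x) _).trans ?_
  have hnn : ∀ x : Fin S → Idx m, 0 ≤ (if |∑ k, u k (x k)| ≤ 1 / 8 then (0:ℝ) else 1) := fun x => by split_ifs <;> norm_num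
  have h5 : ∀ x : Fin S → Idx m, ENNReal.ofReal (pw (WW w s) x) * ENNReal.ofReal (η + 2 * (if |∑ k, u k (x k)| ≤ 1 / 8 then 0 else 1)) =
      ENNReal.ofReal (pw (WW w s) x * (η + 2 * (if |∑ k, u k (x k)| ≤ 1 / 8 then 0 else 1))) := fun x =>
    (ENNReal.ofReal_mul (pw_nonneg _ hW0 x)).symm
  rw [Finset.sum_congr rfl fun x _ => h5 x, ← ENNReal.ofReal_sum_of_nonneg fun x _ => mul_nonneg (pw_nonneg _ hW0 x) (by have := hnn x; positivity)]
  refine ENNReal.ofReal_le_ofReal ?_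
  have hr : 0 < KK * Real.sqrt (L / n) := by have := Real.sqrt_pos.mpr (div_pos hL hn0); positivity
  have hbad := pw_bad (WW w s) u hW0 hW1 hWm (1 / (KK * Real.sqrt (L / n))) (KK * (L / n)) (by positivity)
    (fun k i => by
      have := (hcp k).ub i
      rw [abs_mul, abs_of_pos (by positivity), one_div, inv_mul_le_iff₀ hr, mul_one]
      exact this) hWv
  have hθ : (1 / (KK * Real.sqrt (L / n))) ^ 2 * (KK * (L / n)) ≤ 1 := by
    rw [div_pow, mul_pow, Real.sq_sqrt (by positivity), one_pow, one_div, inv_mul_le_iff₀ (by positivity), mul_one, sq, mul_assoc]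
    have : 0 < KK * (L / n) := by positivity
    nlinarith
  have hexp : Real.exp ((1 / (KK * Real.sqrt (L / n))) ^ 2 * (KK * (L / n)) - 1 / (KK * Real.sqrt (L / n)) / 8) ≤
      Real.exp (1 - 1 / (8 * (KK * Real.sqrt (L / n)))) := by
    rw [Real.exp_le_exp, div_div, mul_comm (KK * Real.sqrt (L / n)) 8]; linarith
  have hs := pw_sum (WW w s) hW1
  calc _ = η * ∑ x, pw (WW w s) x + 2 * ∑ x, pw (WW w s) x * (if |∑ k, u k (x k)| ≤ 1 / 8 then 0 else 1) := by
        rw [Finset.mul_sum, Finset.mul_sum, ← Finset.sum_add_distrib]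
        exact Finset.sum_congr rfl fun x _ => by ring
    _ ≤ _ := by rw [hs]; linarith

lemma hybrid {S : ℕ} (m n : ℕ) (L c1 : ℝ) (hn : 1 ≤ n) (hL : 0 < L) (q : Fin S → ℝ) (hq : IsDist q)
    (w : Fin S → Bool → Idx m → ℝ) (u : Fin S → Idx m → ℝ) (a : Fin S → ℝ)
    (hcp : ∀ k, CP m n L (q k) c1 (w k) (u k) (a k)) (hW : KK * Real.sqrt (L / n) ≤ 1 / 16) :
    ∑' X, ENNReal.ofReal |mixt n q u (fun k => w k true) X - mixt n q u (fun k => w k false) X| ≤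
      ENNReal.ofReal (S * (2 * Real.exp ((3 * (2 * KK * L) - m) / 2) + 4 * Real.exp (1 - 1 / (8 * (KK * Real.sqrt (L / n)))))) := by
  set ε := 2 * Real.exp ((3 * (2 * KK * L) - m) / 2) + 4 * Real.exp (1 - 1 / (8 * (KK * Real.sqrt (L / n)))) with hε
  have hε0 : 0 ≤ ε := by positivity
  have key : ∀ s : Finset (Fin S), ∑' X, ENNReal.ofReal |mixt n q u (WW w s) X - mixt n q u (WW w ∅) X| ≤ ENNReal.ofReal (s.card * ε) := by
    intro s
    induction s using Finset.induction_on with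
    | empty => simp
    | insert j s hj ih =>
      have h1 := hybrid_step m n L c1 hn hL q hq w u a hcp hW s j hj
      rw [Finset.card_insert_of_notMem hj, Nat.cast_succ, add_mul, one_mul, ENNReal.ofReal_add (by positivity) hε0]
      refine le_trans ?_ (add_le_add ih h1)
      rw [← ENNReal.tsum_add]
      refine ENNReal.tsum_le_tsum fun X => ?_
      rw [← ENNReal.ofReal_add (abs_nonneg _) (abs_nonneg _)]
      refine ENNReal.ofReal_le_ofReal ?_
      rw [add_comm]
      exact abs_sub_le _ _ _
  have h := key Finset.univ
  have e1 : WW w Finset.univ = fun k => w k true := by funext k; simp [WW]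
  have e2 : WW w ∅ = fun k => w k false := by funext k; simp [WW]
  rw [e1, e2, Finset.card_univ, Fintype.card_fin] at h
  exact h

lemma abs_le_add_of (u q : ℝ) (h : -(q / 2) ≤ u) (hq : 0 ≤ q) : |u| ≤ u + q := by
  rw [abs_le]; constructor <;> linarith

lemma moment_bound {S : ℕ} (m n : ℕ) (L c1 : ℝ) (q : Fin S → ℝ) (hq : IsDist q)
    (w : Fin S → Bool → Idx m → ℝ) (u : Fin S → Idx m → ℝ) (a : Fin S → ℝ)
    (hcp : ∀ k, CP m n L (q k) c1 (w k) (u k) (a k)) (b : Bool) :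
    ∑ x, pw (fun k => w k b) x * (L1dist (pvec q (fun k => u k (x k))) q - ∑ k, ∑ i, w k b i * |u k i|) ^ 2 ≤
      18 * KK * (L / n) := by
  set W : Fin S → Idx m → ℝ := fun k => w k b with hWd
  have hW0 : ∀ k i, 0 ≤ W k i := fun k i => (hcp k).nonneg b i
  have hW1 : ∀ k, ∑ i, W k i = 1 := fun k => (hcp k).sum_one b
  have hWm : ∀ k, ∑ i, W k i * u k i = 0 := fun k => (hcp k).mean b
  have hWv : ∑ k, ∑ i, W k i * u k i ^ 2 ≤ KK * (L / n) := by
    calc _ ≤ ∑ k, q k * (KK * (L / n)) := Finset.sum_le_sum fun k _ => by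
          have := (hcp k).var b
          simp only [hWd]
          linarith
      _ = _ := by rw [← Finset.sum_mul, hq.2, one_mul]
  set μk : Fin S → ℝ := fun k => ∑ i, W k i * |u k i| with hμk
  have hμe : ∑ k, ∑ i, w k b i * |u k i| = ∑ k, μk k := rfl
  rw [hμe]
  have hμ0 : 0 ≤ ∑ k, μk k := Finset.sum_nonneg fun k _ => Finset.sum_nonneg fun i _ => mul_nonneg (hW0 k i) (abs_nonneg _)
  have hμ1 : ∑ k, μk k ≤ 1 := by
    rw [← hq.2]
    refine Finset.sum_le_sum fun k _ => ?_
    calc _ ≤ ∑ i, (W k i * u k i + W k i * q k) := Finset.sum_le_sum fun i _ => by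
          rw [← mul_add]
          exact mul_le_mul_of_nonneg_left (abs_le_add_of _ _ ((hcp k).lower i) (hq.1 k)) (hW0 k i)
      _ = q k := by rw [Finset.sum_add_distrib, hWm, ← Finset.sum_mul, hW1]; ring
  have hvU := pw_var W u hW1 hWm
  have hvG := pw_var W (fun k i => |u k i| - μk k) hW1 (fun k => by
    simp only [mul_sub, Finset.sum_sub_distrib]
    rw [← Finset.sum_mul, hW1, one_mul, sub_self])
  have hG2 : ∑ k, ∑ i, W k i * (|u k i| - μk k) ^ 2 ≤ KK * (L / n) := by
    refine le_trans (Finset.sum_le_sum fun k _ => ?_) hWv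
    have : ∑ i, W k i * (|u k i| - μk k) ^ 2 = ∑ i, W k i * u k i ^ 2 - μk k ^ 2 := by
      calc _ = ∑ i, (W k i * u k i ^ 2 - 2 * μk k * (W k i * |u k i|) + μk k ^ 2 * W k i) :=
            Finset.sum_congr rfl fun i _ => by rw [← sq_abs (u k i)]; ring
        _ = _ := by
            rw [Finset.sum_add_distrib, Finset.sum_sub_distrib, ← Finset.mul_sum, ← Finset.mul_sum, hW1]
            simp only [hμk]; ring
    rw [this]; nlinarith [sq_nonneg (μk k)]
  calc _ ≤ ∑ x, (2 * (pw W x * (∑ k, (|u k (x k)| - μk k)) ^ 2) + 16 * (pw W x * (∑ k, u k (x k)) ^ 2)) := by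
        refine Finset.sum_le_sum fun x _ => ?_
        have hp := pw_nonneg W hW0 x
        set U := ∑ k, u k (x k) with hUd
        have hS : ∑ k, (|u k (x k)| - μk k) = ∑ k, |u k (x k)| - ∑ k, μk k := Finset.sum_sub_distrib _ _
        have hmain : (L1dist (pvec q (fun k => u k (x k))) q - ∑ k, μk k) ^ 2 ≤
            2 * (∑ k, (|u k (x k)| - μk k)) ^ 2 + 16 * U ^ 2 := by
          rw [hS]
          unfold pvec
          split_ifs with hU
          · have hV : abs (L1dist (fun k => q k * (1 - ∑ k, u k (x k)) + u k (x k)) q - ∑ k, abs (u k (x k))) ≤ abs U := by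
              unfold L1dist
              rw [← Finset.sum_sub_distrib]
              refine (Finset.abs_sum_le_sum_abs _ _).trans ?_
              calc _ ≤ ∑ k, q k * |U| := Finset.sum_le_sum fun k _ => by
                    refine (abs_abs_sub_abs_le_abs_sub _ _).trans (le_of_eq ?_)
                    have : q k * (1 - ∑ k, u k (x k)) + u k (x k) - q k - u k (x k) = q k * (-U) := by rw [hUd]; ring
                    rw [this, abs_mul, abs_neg, abs_of_nonneg (hq.1 k)]
                _ = |U| := by rw [← Finset.sum_mul, hq.2, one_mul]
            have hV2 := sq_le_sq.mpr (le_trans hV (le_refl _))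
            set V := L1dist (fun k => q k * (1 - ∑ k, u k (x k)) + u k (x k)) q
            nlinarith [sq_nonneg ((V - ∑ k, |u k (x k)|) - (∑ k, |u k (x k)| - ∑ k, μk k)), sq_nonneg U]
          · have : L1dist q q = 0 := by simp [L1dist]
            rw [this]
            push Not at hU
            have : (1/4:ℝ)^2 ≤ U^2 := sq_le_sq.mpr (by rw [abs_of_pos (by norm_num : (0:ℝ) < 1/4)]; exact hU.le)
            nlinarith [sq_nonneg (∑ k, |u k (x k)| - ∑ k, μk k)]
        calc _ ≤ pw W x * _ := mul_le_mul_of_nonneg_left hmain hp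
          _ = _ := by ring
    _ ≤ _ := by
        rw [Finset.sum_add_distrib, ← Finset.mul_sum, ← Finset.mul_sum, hvU, hvG]
        linarith

lemma risk_mix {S : ℕ} {κ : Type} [Fintype κ] (n : ℕ) (q : Fin S → ℝ) (p : κ → Fin S → ℝ) (hp : ∀ x, IsDist (p x))
    (c : κ → ℝ) (hc : ∀ x, 0 ≤ c x) (hc1 : ∑ x, c x = 1) (est : (Fin S → ℕ) → ℝ) (μ v : ℝ)
    (hv : ∑ x, c x * (L1dist (p x) q - μ) ^ 2 ≤ v) :
    ∑' X, ENNReal.ofReal ((∑ x, c x * prodPMF n (p x) X) * (est X - μ) ^ 2) ≤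
      2 * (⨆ p : {p : Fin S → ℝ // IsDist p}, risk n p.1 (L1dist p.1 q) est) + ENNReal.ofReal (2 * v) := by
  set R := ⨆ p : {p : Fin S → ℝ // IsDist p}, risk n p.1 (L1dist p.1 q) est
  have hR : ∀ x, risk n (p x) (L1dist (p x) q) est ≤ R := fun x =>
    le_iSup (fun p : {p : Fin S → ℝ // IsDist p} => risk n p.1 (L1dist p.1 q) est) ⟨p x, hp x⟩
  have hP := fun x => tsum_prodPMF n (p x) (hp x).1
  have e1 : ∀ X, (∑ x, c x * prodPMF n (p x) X) * (est X - μ) ^ 2 = |∑ x, c x * (prodPMF n (p x) X * (est X - μ) ^ 2)| := by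
    intro X
    rw [abs_of_nonneg (Finset.sum_nonneg fun x _ => mul_nonneg (hc x) (mul_nonneg ((hP x).1 X) (sq_nonneg _))), Finset.sum_mul]
    exact Finset.sum_congr rfl fun x _ => by ring
  simp only [e1]
  refine (l1_lin c hc _).trans ?_
  have hpt : ∀ x, ∑' X, ENNReal.ofReal |prodPMF n (p x) X * (est X - μ) ^ 2| ≤ 2 * R + ENNReal.ofReal (2 * (L1dist (p x) q - μ) ^ 2) := by
    intro x
    calc _ ≤ ∑' X, (2 * ENNReal.ofReal (prodPMF n (p x) X * (est X - L1dist (p x) q) ^ 2) +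
            ENNReal.ofReal (2 * (L1dist (p x) q - μ) ^ 2) * ENNReal.ofReal (prodPMF n (p x) X)) := by
          refine ENNReal.tsum_le_tsum fun X => ?_
          have h0 := (hP x).1 X
          have e2 : (2 : ℝ≥0∞) = ENNReal.ofReal 2 := by simp
          rw [abs_of_nonneg (mul_nonneg h0 (sq_nonneg _)), e2, ← ENNReal.ofReal_mul (by norm_num), ← ENNReal.ofReal_mul (by positivity),
            ← ENNReal.ofReal_add (by positivity) (by positivity)]
          refine ENNReal.ofReal_le_ofReal ?_
          have : (est X - μ) ^ 2 ≤ 2 * (est X - L1dist (p x) q) ^ 2 + 2 * (L1dist (p x) q - μ) ^ 2 := by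
            nlinarith [sq_nonneg ((est X - L1dist (p x) q) - (L1dist (p x) q - μ))]
          calc _ ≤ prodPMF n (p x) X * _ := mul_le_mul_of_nonneg_left this h0
            _ = _ := by ring
      _ = 2 * risk n (p x) (L1dist (p x) q) est + ENNReal.ofReal (2 * (L1dist (p x) q - μ) ^ 2) := by
          rw [ENNReal.tsum_add, ENNReal.tsum_mul_left, ENNReal.tsum_mul_left, (hP x).2, mul_one, risk]
      _ ≤ _ := by gcongr; exact hR x
  refine (Finset.sum_le_sum fun x _ => mul_le_mul_right (hpt x) _).trans ?_
  simp only [mul_add]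
  rw [Finset.sum_add_distrib, ← Finset.sum_mul, ← ENNReal.ofReal_sum_of_nonneg fun x _ => hc x, hc1, ENNReal.ofReal_one, one_mul]
  gcongr
  calc _ = ∑ x, ENNReal.ofReal (c x * (2 * (L1dist (p x) q - μ) ^ 2)) := Finset.sum_congr rfl fun x _ => (ENNReal.ofReal_mul (hc x)).symm
    _ = ENNReal.ofReal (∑ x, c x * (2 * (L1dist (p x) q - μ) ^ 2)) :=
        (ENNReal.ofReal_sum_of_nonneg fun x _ => mul_nonneg (hc x) (by positivity)).symm
    _ ≤ _ := by
        refine ENNReal.ofReal_le_ofReal ?_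
        calc _ = 2 * ∑ x, c x * (L1dist (p x) q - μ) ^ 2 := by rw [Finset.mul_sum]; exact Finset.sum_congr rfl fun x _ => by ring
          _ ≤ _ := by linarith

lemma two_point {S : ℕ} (m n : ℕ) (L c1 : ℝ) (q : Fin S → ℝ) (hq : IsDist q)
    (w : Fin S → Bool → Idx m → ℝ) (u : Fin S → Idx m → ℝ) (a : Fin S → ℝ)
    (hcp : ∀ k, CP m n L (q k) c1 (w k) (u k) (a k)) (est : (Fin S → ℕ) → ℝ)
    (htv : ∑' X, ENNReal.ofReal |mixt n q u (fun k => w k true) X - mixt n q u (fun k => w k false) X| ≤ ENNReal.ofReal (1 / 2))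
    (D : ℝ) (hD0 : 0 ≤ D) (hD : D ≤ ∑ k, ∑ i, (w k true i - w k false i) * |u k i|) (hDv : 18 * KK * (L / n) ≤ D ^ 2 / 32) :
    ENNReal.ofReal (D ^ 2 / 32) ≤ ⨆ p : {p : Fin S → ℝ // IsDist p}, risk n p.1 (L1dist p.1 q) est := by
  set R := ⨆ p : {p : Fin S → ℝ // IsDist p}, risk n p.1 (L1dist p.1 q) est with hR
  set μ : Bool → ℝ := fun b => ∑ k, ∑ i, w k b i * |u k i| with hμ
  have hDμ : D ≤ μ true - μ false := by
    refine hD.trans (le_of_eq ?_)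
    simp only [hμ, ← Finset.sum_sub_distrib, sub_mul]
  have hdist : ∀ x : Fin S → Idx m, IsDist (pvec q (fun k => u k (x k))) := fun x => pvec_dist q _ hq fun k => (hcp k).lower _
  have hpw0 : ∀ b x, 0 ≤ pw (fun k => w k b) x := fun b x => pw_nonneg _ (fun k i => (hcp k).nonneg b i) x
  have hpw1 : ∀ b, ∑ x, pw (fun k => w k b) x = 1 := fun b => pw_sum _ (fun k => (hcp k).sum_one b)
  have hm0 : ∀ b X, 0 ≤ mixt n q u (fun k => w k b) X := fun b X =>
    Finset.sum_nonneg fun x _ => mul_nonneg (hpw0 b x) ((tsum_prodPMF n _ (hdist x).1).1 X)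
  have hm1 : ∑' X, ENNReal.ofReal (mixt n q u (fun k => w k false) X) = 1 := by
    unfold mixt
    have : ∀ X, ENNReal.ofReal (∑ x, pw (fun k => w k false) x * prodPMF n (pvec q (fun k => u k (x k))) X) =
        ∑ x, ENNReal.ofReal (pw (fun k => w k false) x) * ENNReal.ofReal (prodPMF n (pvec q (fun k => u k (x k))) X) := fun X => by
      rw [ENNReal.ofReal_sum_of_nonneg fun x _ => mul_nonneg (hpw0 false x) ((tsum_prodPMF n _ (hdist x).1).1 X)]
      exact Finset.sum_congr rfl fun x _ => ENNReal.ofReal_mul (hpw0 false x)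
    simp only [this]
    rw [Summable.tsum_finsetSum fun x _ => ENNReal.summable]
    simp only [ENNReal.tsum_mul_left, (tsum_prodPMF n _ (hdist _).1).2, mul_one]
    rw [← ENNReal.ofReal_sum_of_nonneg fun x _ => hpw0 false x, hpw1, ENNReal.ofReal_one]
  have hrm : ∀ b, ∑' X, ENNReal.ofReal (mixt n q u (fun k => w k b) X * (est X - μ b) ^ 2) ≤ 2 * R + ENNReal.ofReal (2 * (D ^ 2 / 32)) := fun b =>
    risk_mix n q (fun x : Fin S → Idx m => pvec q (fun k => u k (x k))) hdist (pw (fun k => w k b)) (hpw0 b) (hpw1 b) est (μ b) (D ^ 2 / 32)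
      ((moment_bound m n L c1 q hq w u a hcp b).trans hDv)
  have main : ENNReal.ofReal (D ^ 2 / 2) ≤ ENNReal.ofReal (D ^ 2 / 2) * ENNReal.ofReal (1 / 2) +
      (2 * R + ENNReal.ofReal (2 * (D ^ 2 / 32))) + (2 * R + ENNReal.ofReal (2 * (D ^ 2 / 32))) := by
    calc ENNReal.ofReal (D ^ 2 / 2) = ∑' X, ENNReal.ofReal (D ^ 2 / 2) * ENNReal.ofReal (mixt n q u (fun k => w k false) X) := by
          rw [ENNReal.tsum_mul_left, hm1, mul_one]
      _ ≤ ∑' X, (ENNReal.ofReal (D ^ 2 / 2) * ENNReal.ofReal |mixt n q u (fun k => w k true) X - mixt n q u (fun k => w k false) X| +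
            ENNReal.ofReal (mixt n q u (fun k => w k true) X * (est X - μ true) ^ 2) +
            ENNReal.ofReal (mixt n q u (fun k => w k false) X * (est X - μ false) ^ 2)) := by
          refine ENNReal.tsum_le_tsum fun X => ?_
          have h0 := hm0 false X
          have h1 := hm0 true X
          set m0 := mixt n q u (fun k => w k false) X
          set m1 := mixt n q u (fun k => w k true) X
          rw [← ENNReal.ofReal_mul (by positivity), ← ENNReal.ofReal_mul (by positivity), ← ENNReal.ofReal_add (by positivity) (by positivity),
            ← ENNReal.ofReal_add (by positivity) (by positivity)]
          refine ENNReal.ofReal_le_ofReal ?_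
          have hsq : D ^ 2 / 2 ≤ (est X - μ true) ^ 2 + (est X - μ false) ^ 2 := by
            nlinarith [sq_nonneg ((est X - μ true) + (est X - μ false))]
          have hmin0 : 0 ≤ min m0 m1 := le_min h0 h1
          have hmin : m0 ≤ |m1 - m0| + min m0 m1 := by
            rcases le_total m0 m1 with h | h
            · rw [min_eq_left h]; have := abs_nonneg (m1 - m0); linarith
            · rw [min_eq_right h]; have := neg_abs_le (m1 - m0); linarith
          calc D ^ 2 / 2 * m0 ≤ D ^ 2 / 2 * |m1 - m0| + min m0 m1 * (D ^ 2 / 2) := by nlinarith [sq_nonneg D]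
            _ ≤ D ^ 2 / 2 * |m1 - m0| + min m0 m1 * ((est X - μ true) ^ 2 + (est X - μ false) ^ 2) := by gcongr
            _ = D ^ 2 / 2 * |m1 - m0| + min m0 m1 * (est X - μ true) ^ 2 + min m0 m1 * (est X - μ false) ^ 2 := by ring
            _ ≤ _ := by
              gcongr
              · exact min_le_right _ _
              · exact min_le_left _ _
      _ ≤ _ := by
          rw [ENNReal.tsum_add, ENNReal.tsum_add, ENNReal.tsum_mul_left]
          gcongr
          · exact hrm true
          · exact hrm false
  by_cases hT : R = ⊤
  · rw [hT]; exact le_top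
  · lift R to NNReal using hT with r hr
    have e2 : (2 : ℝ≥0∞) * (r : ℝ≥0∞) = ENNReal.ofReal (2 * (r:ℝ)) := by
      rw [ENNReal.ofReal_mul (by norm_num), ENNReal.ofReal_coe_nnreal]; simp
    rw [e2, ← ENNReal.ofReal_mul (by positivity), ← ENNReal.ofReal_add (by positivity) (by positivity),
      ← ENNReal.ofReal_add (by positivity) (by positivity), ← ENNReal.ofReal_add (by positivity) (by positivity),
      ENNReal.ofReal_le_ofReal_iff (by positivity)] at main
    rw [← ENNReal.ofReal_coe_nnreal]
    exact ENNReal.ofReal_le_ofReal (by linarith)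

lemma exists_N0 (D : ℝ) : ∃ N₀ : ℕ, ∀ n : ℕ, N₀ ≤ n → 1 ≤ n ∧ 3 ≤ Real.log n ∧ D ^ 2 * Real.log n ^ 3 ≤ n := by
  have h1 : ∀ᶠ n : ℕ in Filter.atTop, 3 ≤ Real.log n :=
    (Real.tendsto_log_atTop.comp tendsto_natCast_atTop_atTop).eventually_ge_atTop 3
  have h2 : ∀ᶠ x : ℝ in Filter.atTop, ‖Real.log x ^ 3‖ ≤ (1 / (D ^ 2 + 1)) * ‖x‖ :=
    (Real.isLittleO_pow_log_id_atTop (n := 3)).def (by positivity)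
  have h3 := tendsto_natCast_atTop_atTop (R := ℝ) |>.eventually h2
  obtain ⟨N, hN⟩ := Filter.eventually_atTop.mp ((h1.and h3).and (Filter.eventually_ge_atTop 1))
  refine ⟨N, fun n hn => ?_⟩
  obtain ⟨⟨a, b⟩, c⟩ := hN n hn
  refine ⟨c, a, ?_⟩
  have hp : 0 ≤ Real.log n ^ 3 := by have : 0 ≤ Real.log n := by linarith
                                     positivity
  rw [Real.norm_of_nonneg hp, Real.norm_of_nonneg (Nat.cast_nonneg n), one_div, ← div_eq_inv_mul, le_div_iff₀ (by positivity)] at b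
  nlinarith

/-- minimax lower bound for estimating `L₁(P,Q)` with `Q` known. -/
theorem minimax_lower_bound_knownQ (A : ℝ) (hA : 1 ≤ A) :
    ∃ c C : ℝ, ∃ N₀ : ℕ, 0 < c ∧ 0 < C ∧
      ∀ S n : ℕ, 2 ≤ S → N₀ ≤ n → (S : ℝ) ≤ (n : ℝ) ^ A →
        ∀ q : Fin S → ℝ, IsDist q →
          C * (Real.sqrt (Real.log n / n) + Real.sqrt S * Real.log n / n) ≤
            ∑ j, min (q j) (Real.sqrt (q j / (n * Real.log n))) →
          ∀ est : (Fin S → ℕ) → ℝ,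
            ENNReal.ofReal (c * (∑ j, min (q j) (Real.sqrt (q j / (n * Real.log n)))) ^ 2) ≤
              ⨆ p : {p : Fin S → ℝ // IsDist p}, risk n p.1 (L1dist p.1 q) est := by
  have hKK := KK_ge
  have hc0 := c0_pos
  obtain ⟨T, hT⟩ : ∃ T : ℝ, T = 6 * KK + 2 * A + 6 := ⟨_, rfl⟩
  obtain ⟨c1, hc1⟩ : ∃ c1 : ℝ, c1 = c0 / (2 * (T + 3)) := ⟨_, rfl⟩
  have hT0 : 0 < T := by rw [hT]; linarith
  have hc1p : 0 < c1 := by rw [hc1]; positivity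
  obtain ⟨N₀, hN₀⟩ := exists_N0 (8 * KK * (A + 16))
  refine ⟨c1 ^ 2 / 32, Real.sqrt (576 * KK) / c1, N₀, by positivity, by positivity, ?_⟩
  intro S n hS hn hSn q hq hB est
  obtain ⟨hn1, hL3, hLn⟩ := hN₀ n hn
  have hn0 : (0 : ℝ) < n := by exact_mod_cast hn1
  obtain ⟨L, hL⟩ : ∃ L : ℝ, L = Real.log n := ⟨_, rfl⟩
  rw [← hL] at hL3 hLn hB ⊢
  have hL0 : 0 < L := by linarith
  set B := ∑ j, min (q j) (Real.sqrt (q j / (n * L))) with hBd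
  set r := Real.sqrt (L / n) with hr
  have hr0 : 0 < r := Real.sqrt_pos.mpr (by positivity)
  have hr2 : r ^ 2 = L / n := Real.sq_sqrt (by positivity)
  -- key smallness
  have hkey : 8 * KK * (A + 16) * L * r ≤ 1 := by
    have h0 : 0 ≤ 8 * KK * (A + 16) * L * r := by positivity
    have : (8 * KK * (A + 16) * L * r) ^ 2 ≤ 1 := by
      rw [mul_pow, hr2]
      calc _ = (8 * KK * (A + 16)) ^ 2 * L ^ 3 / n := by ring
        _ ≤ 1 := by rw [div_le_one hn0]; exact hLn
    nlinarith
  have hW : KK * r ≤ 1 / 16 := by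
    have h1 : 0 < KK * r := by positivity
    have h2 : KK * r * 17 * 3 ≤ KK * r * (A + 16) * L := by gcongr; linarith
    nlinarith
  -- degree
  set m : ℕ := 2 * ⌈T * L / 2⌉₊ + 1 with hm
  have hm1 : T * L ≤ m := by
    have := Nat.le_ceil (T * L / 2)
    rw [hm]; push_cast; linarith
  have hm2 : (m : ℝ) ≤ (T + 3) * L := by
    have := Nat.ceil_lt_add_one (a := T * L / 2) (by positivity)
    rw [hm]; push_cast; nlinarith
  have hm3 : 2 ≤ m := by
    have : (2 : ℝ) ≤ m := by
      refine le_trans ?_ hm1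
      have : 6 ≤ T := by rw [hT]; linarith
      nlinarith
    exact_mod_cast this
  have hodd : Odd m := ⟨_, hm⟩
  have hqle : ∀ k, q k ≤ 1 := fun k => by
    rw [← hq.2]; exact Finset.single_le_sum (fun i _ => hq.1 i) (Finset.mem_univ k)
  have hex : ∀ k, ∃ (w : Bool → Idx m → ℝ) (u : Idx m → ℝ) (a : ℝ), CP m n L (q k) c1 w u a := fun k => by
    rw [hc1]
    exact coord_prior m hm3 hodd n L (T + 3) (q k) hn0 hL0 (by linarith) hm2 (by linarith) (hq.1 k) (hqle k)
  choose w u a hcp using hex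
  have htv := hybrid m n L c1 hn1 hL0 q hq w u a hcp hW
  have hSe : (S : ℝ) ≤ Real.exp (A * L) := by
    rw [hL, mul_comm, ← Real.rpow_def_of_pos hn0]; exact hSn
  have hsmall : S * (2 * Real.exp ((3 * (2 * KK * L) - m) / 2) + 4 * Real.exp (1 - 1 / (8 * (KK * r)))) ≤ 1 / 2 := by
    have hinv : ∀ t : ℝ, 15 ≤ t → Real.exp (-t) ≤ 1 / 16 := fun t ht => by
      have := Real.add_one_le_exp t
      rw [Real.exp_neg, ← one_div]
      exact one_div_le_one_div_of_le (by norm_num) (by linarith)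
    have hinv2 : ∀ t : ℝ, 7 ≤ t → Real.exp (-t) ≤ 1 / 8 := fun t ht => by
      have := Real.add_one_le_exp t
      rw [Real.exp_neg, ← one_div]
      exact one_div_le_one_div_of_le (by norm_num) (by linarith)
    have h1 : Real.exp (A * L) * Real.exp ((3 * (2 * KK * L) - m) / 2) ≤ 1 / 8 := by
      rw [← Real.exp_add]
      refine le_trans (Real.exp_le_exp.mpr ?_) (hinv2 (3 * L) (by linarith))
      rw [hT] at hm1
      nlinarith
    have h2 : Real.exp (A * L) * Real.exp (1 - 1 / (8 * (KK * r))) ≤ 1 / 16 := by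
      rw [← Real.exp_add]
      refine le_trans (Real.exp_le_exp.mpr ?_) (hinv 15 le_rfl)
      have : A * L + 16 ≤ 1 / (8 * (KK * r)) := by
        rw [le_div_iff₀ (by positivity)]
        have : (A * L + 16) * (8 * (KK * r)) ≤ ((A + 16) * L) * (8 * (KK * r)) := by gcongr; nlinarith
        linarith
      linarith
    calc _ ≤ Real.exp (A * L) * (2 * Real.exp ((3 * (2 * KK * L) - m) / 2) + 4 * Real.exp (1 - 1 / (8 * (KK * r)))) := by gcongr
      _ ≤ _ := by linarith
  have htv2 := htv.trans (ENNReal.ofReal_le_ofReal hsmall)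
  have hB0 : 0 ≤ B := Finset.sum_nonneg fun k _ => le_min (hq.1 k) (Real.sqrt_nonneg _)
  have hCr : Real.sqrt (576 * KK) * r ≤ c1 * B := by
    have h1 : 0 ≤ Real.sqrt S * L / n := by positivity
    have h2 : Real.sqrt (576 * KK) / c1 * r ≤ B := by
      refine le_trans ?_ hB
      gcongr
      linarith
    calc _ = c1 * (Real.sqrt (576 * KK) / c1 * r) := by field_simp
      _ ≤ _ := by gcongr
  have := two_point m n L c1 q hq w u a hcp est htv2 (c1 * B) (by positivity)
    (by
      rw [hBd, Finset.mul_sum]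
      exact Finset.sum_le_sum fun k _ => (hcp k).gap)
    (by
      have h1 : (Real.sqrt (576 * KK) * r) ^ 2 ≤ (c1 * B) ^ 2 := by gcongr
      rw [mul_pow, Real.sq_sqrt (by positivity), hr2] at h1
      linarith)
  refine le_trans (le_of_eq ?_) this
  congr 1; ring
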